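/- arXiv:2409.13553 — 5 statements merged into one kernel-verified Lean document; each statement's English description precedes it below -/
import Mathlib

section
/- Let F be an infinite field, let u > r ≥ 2 be integers, and let 1 ≤ k ≤ r−1 and 1 ≤ l ≤ u−r. The set E^Q_{k,l} consists of exactly k+l−2 polynomials, and the quotient of the polynomial ring F[a_1,…,a_{u−1}, b_1,…,b_{u−r−1}, g_0,…,g_{u−r−1}, h_0,…,h_{u−r−1}] (a polynomial ring in N = 4u−3r−2 variables) by the ideal generated by E^Q_{k,l} has Krull dimension N − (k+l−2) = 4u−3r−k−l; equivalently, the ideal generated by E^Q_{k,l} has height k+l−2, so it is a complete intersection ideal. -/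
open Polynomial

noncomputable section

/-- The quotient module `F[t]/(t^m)`. -/
abbrev PQ (F : Type*) [Field F] (m : ℕ) : Type _ := F[X] ⧸ Ideal.span {(X : F[X]) ^ m}

variable (F : Type*) [Field F]

lemma mulQ_cond (m m' : ℕ) (c : F[X]) (h : (X : F[X]) ^ m' ∣ c * X ^ m) :
    Ideal.span {(X : F[X]) ^ m} ≤
      Submodule.comap (LinearMap.mulLeft F[X] c) (Ideal.span {(X : F[X]) ^ m'}) := by
  rw [Ideal.span_le]
  intro x hx
  rw [Set.mem_singleton_iff] at hx
  subst hx
  simp only [SetLike.mem_coe, Submodule.mem_comap, LinearMap.mulLeft_apply]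
  exact Ideal.mem_span_singleton.mpr h

/-- The `F`-linear map `F[t]/(t^m) → F[t]/(t^{m'})` induced by multiplication by the
polynomial `c`, well-defined whenever `t^{m'} ∣ c · t^m`. -/
def mulQ (m m' : ℕ) (c : F[X]) (h : (X : F[X]) ^ m' ∣ c * X ^ m) :
    PQ F m →ₗ[F] PQ F m' :=
  LinearMap.restrictScalars F
    (Submodule.mapQ (Ideal.span {(X : F[X]) ^ m}) (Ideal.span {(X : F[X]) ^ m'})
      (LinearMap.mulLeft F[X] c) (mulQ_cond F m m' c h))

lemma dvd_A (u : ℕ) (c : F[X]) : (X : F[X]) ^ u ∣ c * X ^ u := Dvd.intro c (mul_comm _ _)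

lemma dvd_G (u r : ℕ) (hru : r ≤ u) (g : F[X]) :
    (X : F[X]) ^ u ∣ (X ^ r * g) * X ^ (u - r) := by
  refine Dvd.intro g ?_
  rw [mul_comm ((X:F[X])^r) g, mul_assoc, ← pow_add, Nat.add_sub_cancel' hru, mul_comm]

lemma dvd_H (u r : ℕ) (h : F[X]) : (X : F[X]) ^ (u - r) ∣ h * X ^ u :=
  Dvd.dvd.mul_left (pow_dvd_pow _ (Nat.sub_le u r)) h

/-- The `F[t]`-module endomorphism of `V = F[t]/(t^u) ⊕ t^r·F[t]/(t^u)` given by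
`M(v₁, v₂) = (a v₁ + g v₂, h t^r v₁ + b v₂)`, where the second summand
`t^r·F[t]/(t^u)` is identified with `F[t]/(t^{u-r})` via `w ↦ t^r w`
(so the lower-left entry becomes `v₁ ↦ h v₁ mod t^{u-r}` and the upper-right
entry becomes `w ↦ t^r g w mod t^u`). -/
def Mmap (u r : ℕ) (hru : r ≤ u) (a g h b : F[X]) :
    (PQ F u × PQ F (u - r)) →ₗ[F] (PQ F u × PQ F (u - r)) :=
  LinearMap.prod
    ((mulQ F u u a (dvd_A F u a)).comp (LinearMap.fst F (PQ F u) (PQ F (u - r))) +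
      (mulQ F (u - r) u (X ^ r * g) (dvd_G F u r hru g)).comp
        (LinearMap.snd F (PQ F u) (PQ F (u - r))))
    ((mulQ F u (u - r) h (dvd_H F u r h)).comp (LinearMap.fst F (PQ F u) (PQ F (u - r))) +
      (mulQ F (u - r) (u - r) b (dvd_A F (u - r) b)).comp
        (LinearMap.snd F (PQ F u) (PQ F (u - r))))

/-- `B` has Jordan type `P` (a partition given as the multiset of its parts):
the corank of every power of `B` is the one prescribed by `P`, i.e.
`dim ker (B^s) = Σ_i min(pᵢ, s)` for all `s ≥ 0`. -/
def JordanTypeIs {V : Type*} [AddCommGroup V] [Module F V] (B : Module.End F V)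
    (P : Multiset ℕ) : Prop :=
  ∀ s : ℕ, Module.finrank F (LinearMap.ker (B ^ s)) = (P.map fun p => min p s).sum

/-- Index type for the `N = 4u-3r-2` coordinates
`(a_1,…,a_{u−1}, b_1,…,b_{u−r−1}, g_0,…,g_{u−r−1}, h_0,…,h_{u−r−1})`. -/
abbrev Vars (u r : ℕ) : Type := Fin (u - 1) ⊕ Fin (u - r - 1) ⊕ Fin (u - r) ⊕ Fin (u - r)

/-- `a = Σ_{i=1}^{u−1} a_i t^i`. -/
def paOf (u r : ℕ) (x : Vars u r → F) : F[X] :=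
  ∑ i : Fin (u - 1), C (x (Sum.inl i)) * X ^ ((i : ℕ) + 1)

/-- `b = Σ_{i=1}^{u−r−1} b_i t^i`. -/
def pbOf (u r : ℕ) (x : Vars u r → F) : F[X] :=
  ∑ i : Fin (u - r - 1), C (x (Sum.inr (Sum.inl i))) * X ^ ((i : ℕ) + 1)

/-- `g = Σ_{i=0}^{u−r−1} g_i t^i`. -/
def pgOf (u r : ℕ) (x : Vars u r → F) : F[X] :=
  ∑ i : Fin (u - r), C (x (Sum.inr (Sum.inr (Sum.inl i)))) * X ^ (i : ℕ)

/-- `h = Σ_{i=0}^{u−r−1} h_i t^i`. -/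
def phOf (u r : ℕ) (x : Vars u r → F) : F[X] :=
  ∑ i : Fin (u - r), C (x (Sum.inr (Sum.inr (Sum.inr i)))) * X ^ (i : ℕ)

/-- The nilpotent endomorphism `M_x` of `V` determined by the point `x ∈ F^N`. -/
def Mx (u r : ℕ) (hru : r ≤ u) (x : Vars u r → F) :
    Module.End F (PQ F u × PQ F (u - r)) :=
  Mmap F u r hru (paOf F u r x) (pgOf F u r x) (phOf F u r x) (pbOf F u r x)

/-- The variable `a_i` as a polynomial function on `F^N` (meaningful for `1 ≤ i ≤ u-1`). -/
def Av (u r : ℕ) (i : ℕ) : MvPolynomial (Vars u r) F :=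
  if h : i - 1 < u - 1 then MvPolynomial.X (Sum.inl ⟨i - 1, h⟩) else 0

/-- The variable `b_i` as a polynomial function on `F^N` (meaningful for `1 ≤ i ≤ u-r-1`). -/
def Bv (u r : ℕ) (i : ℕ) : MvPolynomial (Vars u r) F :=
  if h : i - 1 < u - r - 1 then MvPolynomial.X (Sum.inr (Sum.inl ⟨i - 1, h⟩)) else 0

/-- The variable `g_i` as a polynomial function on `F^N` (meaningful for `0 ≤ i ≤ u-r-1`). -/
def Gv (u r : ℕ) (i : ℕ) : MvPolynomial (Vars u r) F :=
  if h : i < u - r then MvPolynomial.X (Sum.inr (Sum.inr (Sum.inl ⟨i, h⟩))) else 0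

/-- The variable `h_i` as a polynomial function on `F^N` (meaningful for `0 ≤ i ≤ u-r-1`). -/
def Hv (u r : ℕ) (i : ℕ) : MvPolynomial (Vars u r) F :=
  if h : i < u - r then MvPolynomial.X (Sum.inr (Sum.inr (Sum.inr ⟨i, h⟩))) else 0

/-- The set of polynomials `E^Q_{k,l}` for `Q = (u, u-r)`:
`{a_1,…,a_{k−1}, b_1,…,b_{l−1}}` if `k+l ≤ r`, and
`{a_1,…,a_{k−1}, b_1,…,b_{r−k−1}}` together with the quadratic polynomials
`Σ_{j=0}^{m} a_{k+j} b_{r−k+m−j} − Σ_{j=0}^{m} g_j h_{m−j}` for `0 ≤ m ≤ k+l−r−1`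
if `k+l ≥ r+1`. -/
def Eset (u r k l : ℕ) : Set (MvPolynomial (Vars u r) F) :=
  if k + l ≤ r then
    {p | ∃ i, 1 ≤ i ∧ i ≤ k - 1 ∧ p = Av F u r i} ∪
      {p | ∃ i, 1 ≤ i ∧ i ≤ l - 1 ∧ p = Bv F u r i}
  else
    {p | ∃ i, 1 ≤ i ∧ i ≤ k - 1 ∧ p = Av F u r i} ∪
      {p | ∃ i, 1 ≤ i ∧ i ≤ r - k - 1 ∧ p = Bv F u r i} ∪
      {p | ∃ m, m ≤ k + l - r - 1 ∧ p =
        (∑ j ∈ Finset.range (m + 1), Av F u r (k + j) * Bv F u r (r - k + m - j)) -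
          (∑ j ∈ Finset.range (m + 1), Gv F u r j * Hv F u r (m - j))}

/-- The common zero locus in `F^N` of a set `T` of polynomials. -/
def zLocus (u r : ℕ) (T : Set (MvPolynomial (Vars u r) F)) : Set (Vars u r → F) :=
  {x | ∀ p ∈ T, MvPolynomial.eval x p = 0}

/-- `X^Q_{k,l}`, the common zero locus of `E^Q_{k,l}`. -/
def Xlocus (u r k l : ℕ) : Set (Vars u r → F) := zLocus F u r (Eset F u r k l)

/-- Zariski-closed subsets of `F^N`: common zero loci of sets of polynomials. -/
def IsZClosed (u r : ℕ) (S : Set (Vars u r → F)) : Prop :=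
  ∃ T : Set (MvPolynomial (Vars u r) F), S = zLocus F u r T

/-- The Zariski closure of a subset of `F^N`. -/
def zClosure (u r : ℕ) (S : Set (Vars u r → F)) : Set (Vars u r → F) :=
  ⋂₀ {C | IsZClosed F u r C ∧ S ⊆ C}

end

section Burge

/-- Scanning the frequency sequence `f` downward from `j`, forming backward pairs:
whenever `f j > 0` (and `j` has not been consumed by a previously formed pair),
put `j` in the set and consume the index `j - 1`. -/
def RsetGo (f : ℕ → ℕ) : ℕ → Finset ℕ
  | 0 => ∅
  | 1 => if 0 < f 1 then {1} else ∅
  | (j + 2) => if 0 < f (j + 2) then insert (j + 2) (RsetGo f j) else RsetGo f (j + 1)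

/-- The set `R(P)` of a partition `P` (given as the multiset of its parts, with
frequency sequence `j ↦ P.count j`); the scan starts at the largest part `P.sup`. -/
def Rset (P : Multiset ℕ) : Finset ℕ := RsetGo (fun j => P.count j) P.sup

/-- The partition `∂P`: for each `j ∈ R(P)` one copy of the part `j` is replaced by
`j - 1` (discarded when `j - 1 = 0`). -/
def dP (P : Multiset ℕ) : Multiset ℕ :=
  (P - (Rset P).val) + (((Rset P).val.map fun j => j - 1).filter fun j => 0 < j)

/-- Fuel-driven computation of the Burge code; `false` stands for `α`, `true` for `β`.
(The fuel `P.sum + 1` used in `burgeCode` always suffices, since `∂` strictly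
decreases the size of a nonempty partition.) -/
def burgeGo : ℕ → Multiset ℕ → List Bool
  | 0, _ => []
  | (n + 1), P =>
    if P = 0 then [false]
    else (if 1 ∈ Rset P then true else false) :: burgeGo n (dP P)

/-- The Burge code of the partition `P`: the word `w_1 ⋯ w_m` with `w_i = β` (`true`)
if `∂^{i-1} P` is in class `B` (i.e. `1 ∈ R(∂^{i-1}P)`) and `w_i = α` (`false`)
otherwise, where `m = min { i : ∂^{i-1} P = (0) }`. -/
def burgeCode (P : Multiset ℕ) : List Bool := burgeGo (P.sum + 1) P

/-- The almost rectangular partition `[m]^k` of `m` into `k` parts, each equal to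
`⌈m/k⌉` or `⌊m/k⌋`. -/
def arPart (m k : ℕ) : Multiset ℕ :=
  Multiset.replicate (m % k) (m / k + 1) + Multiset.replicate (k - m % k) (m / k)

/-- Greedy decomposition of a weakly decreasing list of parts into maximal
almost rectangular segments from the top (fuel-driven helper). -/
def greedyGo : ℕ → List ℕ → List (List ℕ)
  | 0, _ => []
  | _ + 1, [] => []
  | n + 1, p :: rest =>
    ((p :: rest).takeWhile fun q => decide (p ≤ q + 1)) ::
      greedyGo n ((p :: rest).dropWhile fun q => decide (p ≤ q + 1))

/-- The greedy decomposition of a weakly decreasing list of parts into maximal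
almost rectangular subpartitions from the top. -/
def greedy (l : List ℕ) : List (List ℕ) := greedyGo l.length l

end Burge

/-!
The origin is a zero of `E = E^Q_{k,l}`, and every maximal ideal of a polynomial ring in `N`
variables over a field has height `N`, so by Krull's height theorem `|E|` plus the dimension of the
quotient is at least `N`. As `|E| ≤ k + l - 2`, it remains to show that the quotient by a prime
`P ⊇ E` has dimension at most `N - (k + l - 2)`.

Let `a_{k+i}` be the first of `a_k, a_{k+1}, …` outside `P`, or `i = k + l - r` if this is
smaller. Modulo `P` the quadratic relations say that the first `k + l - r` terms of the convolution
of `(a_{k+j})_j` with `(b_{r-k+j})_j` are polynomials in the `g` and `h`. Dividing by the leading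
term `a_{k+i}`, they can be solved successively for `b_{r-k}, …, b_{l-i-1}`. Thus passing from
`i = 0` to `i` trades the `i` coordinates `a_k, …, a_{k+i-1}`, which vanish, for
`b_{l-i}, …, b_{l-1}`, and the coordinates `a_j` (`j ≥ k + i`), `b_j` (`j ≥ l - i`), `g`, `h` always
number `N - (k + l - 2)`.
-/

theorem height_mvPolynomial_eq_card_of_isMaximal {F σ : Type*} [Field F] [Finite σ]
    (m : Ideal (MvPolynomial σ F)) [m.IsMaximal] : m.height = Nat.card σ := by
  induction σ using Finite.induction_empty_option with
  | of_equiv e ih =>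
    let f := (MvPolynomial.renameEquiv F e).symm.toRingEquiv
    have : (m.map f).IsMaximal := Ideal.map_isMaximal_of_equiv f
    rw [← Nat.card_congr e, ← ih (m.map f), f.height_map]
  | h_empty =>
    let f := MvPolynomial.isEmptyRingEquiv F PEmpty
    have : (m.map f).IsMaximal := Ideal.map_isMaximal_of_equiv f
    rw [← f.height_map m, Ideal.eq_bot_of_prime (m.map f)]
    simp
  | @h_option σ _ ih =>
    let f := (MvPolynomial.optionEquivLeft F σ).toRingEquiv
    let M : Ideal (MvPolynomial σ F)[X] := m.map f
    have : M.IsMaximal := Ideal.map_isMaximal_of_equiv f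
    have : (M.under (MvPolynomial σ F)).IsMaximal :=
      Polynomial.isMaximal_comap_C_of_isJacobsonRing M
    have : M.LiesOver (M.under (MvPolynomial σ F)) := ⟨rfl⟩
    rw [← f.height_map m, Polynomial.height_eq_height_add_one (M.under _) M, ih]
    simp

theorem card_le_ringKrullDim_quotient_span_add_encard {F σ : Type*} [Field F] [Finite σ]
    (s : Set (MvPolynomial σ F)) (hs : Ideal.span s ≠ ⊤) :
    (Nat.card σ : WithBot ℕ∞) ≤ ringKrullDim (MvPolynomial σ F ⧸ Ideal.span s) + s.encard := by
  obtain ⟨m, hm, hsm⟩ := Ideal.exists_le_maximal _ hs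
  rw [← WithBot.coe_natCast, ← height_mvPolynomial_eq_card_of_isMaximal m]
  exact Ideal.height_le_ringKrullDim_quotient_add_encard s (Ideal.span_le.mp hsm)

theorem ringKrullDim_le_of_forall_isPrime_quotient {R : Type*} [CommRing R] {d : WithBot ℕ∞}
    (h : ∀ P : Ideal R, P.IsPrime → ringKrullDim (R ⧸ P) ≤ d) : ringKrullDim R ≤ d := by
  rw [ringKrullDim, Order.krullDim_eq_iSup_coheight]
  refine iSup_le fun P ↦ (h P.asIdeal P.isPrime).trans' ?_
  rw [Order.coheight_eq_krullDim_Ici, ringKrullDim_quotient]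
  rfl

theorem ringKrullDim_le_of_isIntegral (R S : Type*) [CommRing R] [CommRing S] [Algebra R S]
    [Algebra.IsIntegral R S] : ringKrullDim S ≤ ringKrullDim R :=
  Order.krullDim_le_of_strictMono (PrimeSpectrum.comap (algebraMap R S))
    fun _ _ hpq ↦ Ideal.IsIntegral.comap_lt_comap hpq

theorem ringKrullDim_le_trdeg (F D : Type*) [Field F] [CommRing D] [IsDomain D] [Algebra F D]
    [Algebra.FiniteType F D] : ringKrullDim D ≤ (Algebra.trdeg F D).toENat := by
  obtain ⟨s, g, hinj, hint⟩ := exists_integral_inj_algHom_of_fg F D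
  let : Algebra (MvPolynomial (Fin s) F) D := g.toAlgebra
  have : Algebra.IsIntegral (MvPolynomial (Fin s) F) D := ⟨hint⟩
  have hindep := (MvPolynomial.algebraicIndependent_X (Fin s) F).map' hinj
  have hs : (s : Cardinal) ≤ Algebra.trdeg F D := by
    simpa using hindep.lift_cardinalMk_le_trdeg
  calc ringKrullDim D ≤ ringKrullDim (MvPolynomial (Fin s) F) := ringKrullDim_le_of_isIntegral _ _
    _ = s := by simp
    _ ≤ (Algebra.trdeg F D).toENat := by
      exact_mod_cast Cardinal.natCast_le_toENat.mpr hs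

theorem ncard_eq_and_ringKrullDim_eq_of_le {F σ : Type*} [Field F] [Finite σ]
    {s : Set (MvPolynomial σ F)} {c d : ℕ} (hs : Ideal.span s ≠ ⊤) (hc : s.encard ≤ c)
    (hd : ringKrullDim (MvPolynomial σ F ⧸ Ideal.span s) ≤ d) (hcd : c + d ≤ Nat.card σ) :
    s.ncard = c ∧ ringKrullDim (MvPolynomial σ F ⧸ Ideal.span s) = d := by
  have hfin : s.Finite := Set.finite_of_encard_le_coe hc
  rw [← hfin.cast_ncard_eq, Nat.cast_le] at hc
  have hlow : ((c + d : ℕ) : WithBot ℕ∞) ≤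
      ringKrullDim (MvPolynomial σ F ⧸ Ideal.span s) + s.ncard := by
    have hcard := card_le_ringKrullDim_quotient_span_add_encard s hs
    rw [← hfin.cast_ncard_eq] at hcard
    exact hcard.trans' (Nat.cast_le.mpr hcd)
  refine ⟨le_antisymm hc ?_, le_antisymm hd ?_⟩
  · have hle : ((c + d : ℕ) : WithBot ℕ∞) ≤ (d + s.ncard : ℕ) :=
      hlow.trans (by push_cast; gcongr)
    have := Nat.cast_le.mp hle
    lia
  · suffices (d : WithBot ℕ∞) + c ≤ ringKrullDim (MvPolynomial σ F ⧸ Ideal.span s) + c from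
      ENat.WithBot.add_le_add_natCast_right_iff.mp this
    calc (d : WithBot ℕ∞) + c = (c + d : ℕ) := by push_cast; exact add_comm _ _
      _ ≤ ringKrullDim (MvPolynomial σ F ⧸ Ideal.span s) + s.ncard := hlow
      _ ≤ ringKrullDim (MvPolynomial σ F ⧸ Ideal.span s) + c := by gcongr

theorem isAlgebraic_map_of_mem {R A B : Type*} [CommRing R] [CommRing A] [CommRing B]
    [Nontrivial B] [Algebra R A] [Algebra R B] (φ : A →ₐ[R] B) {K : Subalgebra R A} {x : A}
    (hx : x ∈ K) : IsAlgebraic (K.map φ) (φ x) :=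
  isAlgebraic_algebraMap (⟨φ x, Subalgebra.mem_map.mpr ⟨x, hx, rfl⟩⟩ : K.map φ)

theorem isAlgebraic_of_forall_isAlgebraic_X {R A σ : Type*} [CommRing R] [CommRing A] [IsDomain A]
    [Algebra R A] {φ : MvPolynomial σ R →ₐ[R] A} (hφ : Function.Surjective φ)
    (K : Subalgebra R A) (h : ∀ v, IsAlgebraic K (φ (MvPolynomial.X v))) :
    Algebra.IsAlgebraic K A := by
  let C := ((Subalgebra.algebraicClosure K A).restrictScalars R).comap φ
  have hC : Algebra.adjoin R (Set.range (MvPolynomial.X : σ → MvPolynomial σ R)) ≤ C :=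
    Algebra.adjoin_le (Set.range_subset_iff.mpr h)
  rw [MvPolynomial.adjoin_range_X] at hC
  refine ⟨fun y ↦ ?_⟩
  obtain ⟨p, rfl⟩ := hφ y
  exact hC Algebra.mem_top

theorem ringKrullDim_le_card_of_isAlgebraic {F D σ : Type*} [Field F] [CommRing D] [IsDomain D]
    [Algebra F D] [Finite σ] {φ : MvPolynomial σ F →ₐ[F] D} (hφ : Function.Surjective φ)
    (T : Finset σ)
    (hT : ∀ v, IsAlgebraic ((MvPolynomial.supported F (T : Set σ)).map φ)
      (φ (MvPolynomial.X v))) :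
    ringKrullDim D ≤ T.card := by
  have : Algebra.FiniteType F D := .of_surjective φ hφ
  let K := (MvPolynomial.supported F (T : Set σ)).map φ
  let s : Set D := φ '' (MvPolynomial.X '' (T : Set σ))
  have hK : K = Algebra.adjoin F s := AlgHom.map_adjoin φ _
  have : Algebra.IsAlgebraic K D := isAlgebraic_of_forall_isAlgebraic_X hφ K hT
  rw [hK] at this
  have hs : Cardinal.mk s ≤ T.card := by
    have hTfin := T.finite_toSet.image (MvPolynomial.X : σ → MvPolynomial σ F)
    rw [← Set.cast_ncard (hTfin.image φ), Nat.cast_le, ← Set.ncard_coe_finset]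
    exact (Set.ncard_image_le hTfin).trans (Set.ncard_image_le T.finite_toSet)
  have htr := (Algebra.IsAlgebraic.trdeg_le_cardinalMk F s).trans hs
  refine (ringKrullDim_le_trdeg F D).trans ?_
  exact_mod_cast Cardinal.toENat_le_natCast.mpr htr

theorem isAlgebraic_of_isAlgebraic_convolution {R A : Type*} [CommRing R] [IsDomain R]
    [CommRing A] [NoZeroDivisors A] [Algebra R A] {α β : ℕ → A} {i n : ℕ}
    (hlt : ∀ j < i, α j = 0) (hi : i < n → α i ≠ 0) (hα : ∀ j, IsAlgebraic R (α j))
    (hαβ : ∀ m < n, IsAlgebraic R (∑ j ∈ Finset.range (m + 1), α j * β (m - j)))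
    (j : ℕ) (hj : j + i < n) : IsAlgebraic R (β j) := by
  induction j using Nat.strong_induction_on with
  | _ j ih =>
    have hmem : i ∈ Finset.range (j + i + 1) := Finset.mem_range.mpr (by lia)
    have hrest : IsAlgebraic R
        (∑ s ∈ (Finset.range (j + i + 1)).erase i, α s * β (j + i - s)) := by
      refine sum_mem (S := Subalgebra.algebraicClosure R A) fun s hs ↦ ?_
      rw [Finset.mem_erase, Finset.mem_range] at hs
      obtain hsi | his := lt_or_ge s i
      · rw [hlt s hsi, zero_mul]
        exact zero_mem _
      · exact (hα s).mul (ih _ (by lia) (by lia))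
    have hlead : IsAlgebraic R (α i * β j) := by
      have hsum := (hαβ (j + i) hj).sub hrest
      rwa [← Finset.add_sum_erase _ _ hmem, Nat.add_sub_cancel, add_sub_cancel_right] at hsum
    exact .of_mul (mem_nonZeroDivisors_of_ne_zero (hi (by lia))) (hα i) hlead

theorem exists_le_forall_lt_eq_zero {M : Type*} [Zero M] (α : ℕ → M) (n : ℕ) :
    ∃ i ≤ n, (∀ j < i, α j = 0) ∧ (i < n → α i ≠ 0) := by
  classical
  have h : ∃ i, i = n ∨ α i ≠ 0 := ⟨n, .inl rfl⟩
  refine ⟨Nat.find h, Nat.find_min' h (.inl rfl), fun j hj ↦ ?_,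
    fun hlt ↦ (Nat.find_spec h).resolve_left hlt.ne⟩
  exact of_not_not fun hne ↦ Nat.find_min h hj (.inr hne)

theorem span_ne_top_of_forall_eval_eq_zero {R σ : Type*} [CommSemiring R] [Nontrivial R]
    {s : Set (MvPolynomial σ R)} (x : σ → R) (h : ∀ p ∈ s, MvPolynomial.eval x p = 0) :
    Ideal.span s ≠ ⊤ :=
  ne_top_of_le_ne_top (RingHom.ker_ne_top (MvPolynomial.eval x)) (Ideal.span_le.mpr h)

/-- The coordinates `a_p, …, a_{u-1}`, `b_q, …, b_{u-r-1}` and all `g_i`, `h_i`; modulo a prime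
containing `E^Q_{k,l}`, those with `p = k + i` and `q = l - i` for a suitable `i` determine the
remaining coordinates up to algebraic extension. -/
def freeVars (u r p q : ℕ) : Finset (Vars u r) :=
  (Finset.univ.filter fun i : Fin (u - 1) ↦ p ≤ i + 1).disjSum
    ((Finset.univ.filter fun i : Fin (u - r - 1) ↦ q ≤ i + 1).disjSum Finset.univ)

section FreeVars

variable {u r p q : ℕ}

theorem inl_mem_freeVars {i : Fin (u - 1)} : Sum.inl i ∈ freeVars u r p q ↔ p ≤ i + 1 := by
  simp [freeVars]

theorem inr_inl_mem_freeVars {i : Fin (u - r - 1)} :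
    Sum.inr (Sum.inl i) ∈ freeVars u r p q ↔ q ≤ i + 1 := by
  simp [freeVars]

theorem inr_inr_mem_freeVars (v : Fin (u - r) ⊕ Fin (u - r)) :
    Sum.inr (Sum.inr v) ∈ freeVars u r p q := by
  simp [freeVars]

theorem card_filter_le_val_add_one (n p : ℕ) :
    (Finset.univ.filter fun i : Fin n ↦ p ≤ i + 1).card = n - (p - 1) := by
  have hcompl : (Finset.univ.filter fun i : Fin n ↦ p ≤ i + 1) =
      (Finset.univ.filter fun i : Fin n ↦ (i : ℕ) < p - 1)ᶜ := by
    ext i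
    simp only [Finset.mem_filter_univ, Finset.mem_compl]
    lia
  rw [hcompl, Finset.card_compl, Fin.card_filter_val_lt, Fintype.card_fin]
  lia

theorem card_freeVars (hp : 1 ≤ p) (hpu : p ≤ u) (hq : 1 ≤ q) (hqu : q ≤ u - r) :
    (freeVars u r p q).card = 4 * u - 3 * r - p - q := by
  simp only [freeVars, Finset.card_disjSum, card_filter_le_val_add_one,
    Finset.card_univ, Fintype.card_sum, Fintype.card_fin]
  lia

end FreeVars

section Relations

variable {F : Type*} [Field F] {u r k l p q j m : ℕ}

theorem Av_mem_supported (hj : p ≤ j) :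
    Av F u r j ∈ MvPolynomial.supported F (freeVars u r p q : Set (Vars u r)) := by
  unfold Av
  split_ifs
  · exact MvPolynomial.X_mem_supported.mpr (inl_mem_freeVars.mpr (by dsimp only; lia))
  · exact zero_mem _

theorem Bv_mem_supported (hj : q ≤ j) :
    Bv F u r j ∈ MvPolynomial.supported F (freeVars u r p q : Set (Vars u r)) := by
  unfold Bv
  split_ifs
  · exact MvPolynomial.X_mem_supported.mpr (inr_inl_mem_freeVars.mpr (by dsimp only; lia))
  · exact zero_mem _

theorem Gv_mem_supported :
    Gv F u r j ∈ MvPolynomial.supported F (freeVars u r p q : Set (Vars u r)) := by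
  unfold Gv
  split_ifs
  · exact MvPolynomial.X_mem_supported.mpr (inr_inr_mem_freeVars _)
  · exact zero_mem _

theorem Hv_mem_supported :
    Hv F u r j ∈ MvPolynomial.supported F (freeVars u r p q : Set (Vars u r)) := by
  unfold Hv
  split_ifs
  · exact MvPolynomial.X_mem_supported.mpr (inr_inr_mem_freeVars _)
  · exact zero_mem _

theorem X_inl_eq_Av (i : Fin (u - 1)) :
    (MvPolynomial.X (Sum.inl i) : MvPolynomial (Vars u r) F) = Av F u r (i + 1) := by
  simp [Av]

theorem X_inr_inl_eq_Bv (i : Fin (u - r - 1)) :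
    (MvPolynomial.X (Sum.inr (Sum.inl i)) : MvPolynomial (Vars u r) F) = Bv F u r (i + 1) := by
  simp [Bv]

variable (F u r k) in
/-- The quadratic polynomial `Σ_{j=0}^m a_{k+j} b_{r-k+m-j} - Σ_{j=0}^m g_j h_{m-j}` of
`E^Q_{k,l}`, with the index of `b` bracketed as `r - k + (m - j)` to exhibit the first sum as the
convolution of the sequences `a_{k+j}` and `b_{r-k+j}`. -/
noncomputable def quadRel (m : ℕ) : MvPolynomial (Vars u r) F :=
  ∑ j ∈ Finset.range (m + 1), Av F u r (k + j) * Bv F u r (r - k + (m - j)) -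
    ∑ j ∈ Finset.range (m + 1), Gv F u r j * Hv F u r (m - j)

theorem Eset_eq :
    Eset F u r k l = Av F u r '' Set.Ico 1 k ∪ Bv F u r '' Set.Ico 1 (min l (r - k)) ∪
      quadRel F u r k '' Set.Iio (k + l - r) := by
  have hquad (m : ℕ) :
      quadRel F u r k m =
        (∑ j ∈ Finset.range (m + 1), Av F u r (k + j) * Bv F u r (r - k + m - j)) -
          ∑ j ∈ Finset.range (m + 1), Gv F u r j * Hv F u r (m - j) := by
    refine congrArg (· - _) (Finset.sum_congr rfl fun j hj ↦ ?_)
    rw [Nat.add_sub_assoc (Finset.mem_range_succ_iff.mp hj)]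
  have himage (f : ℕ → MvPolynomial (Vars u r) F) (n : ℕ) :
      {P | ∃ i, 1 ≤ i ∧ i ≤ n - 1 ∧ P = f i} = f '' Set.Ico 1 n := by
    ext P
    exact exists_congr fun i ↦ by simp only [Set.mem_Ico]; grind
  simp only [Eset, himage, ← hquad]
  split_ifs with h
  · rw [min_eq_left (by lia), Nat.sub_eq_zero_of_le h]
    simp
  · rw [min_eq_right (by lia)]
    congr 1
    ext P
    exact exists_congr fun m ↦ by simp only [Set.mem_Iio]; grind

theorem Av_mem_Eset (hj1 : 1 ≤ j) (hj : j < k) : Av F u r j ∈ Eset F u r k l := by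
  rw [Eset_eq]
  exact .inl (.inl ⟨j, ⟨hj1, hj⟩, rfl⟩)

theorem Bv_mem_Eset (hj1 : 1 ≤ j) (hjl : j < l) (hjr : j < r - k) :
    Bv F u r j ∈ Eset F u r k l := by
  rw [Eset_eq]
  exact .inl (.inr ⟨j, ⟨hj1, lt_min hjl hjr⟩, rfl⟩)

theorem quadRel_mem_Eset (hm : m < k + l - r) : quadRel F u r k m ∈ Eset F u r k l := by
  rw [Eset_eq]
  exact .inr ⟨m, hm, rfl⟩

theorem encard_Eset_le (hk : 1 ≤ k) (hkr : k < r) (hl : 1 ≤ l) :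
    (Eset F u r k l).encard ≤ (k + l - 2 : ℕ) := by
  have hsum : k - 1 + (min l (r - k) - 1) + (k + l - r) = k + l - 2 := by lia
  rw [Eset_eq, ← hsum]
  push_cast
  refine (Set.encard_union_le _ _).trans (add_le_add ((Set.encard_union_le _ _).trans
    (add_le_add ?_ ?_)) ?_)
  all_goals refine (Set.encard_image_le _ _).trans ?_
  · simp [← Finset.coe_Ico, Set.encard_coe_eq_coe_finsetCard]
  · simp [← Finset.coe_Ico, Set.encard_coe_eq_coe_finsetCard]
  · simp [← Finset.coe_Iio, Set.encard_coe_eq_coe_finsetCard]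

theorem zero_mem_Xlocus : 0 ∈ Xlocus F u r k l := by
  have hA (i : ℕ) : MvPolynomial.eval 0 (Av F u r i) = 0 := by
    unfold Av; split_ifs <;> simp
  have hB (i : ℕ) : MvPolynomial.eval 0 (Bv F u r i) = 0 := by
    unfold Bv; split_ifs <;> simp
  have hG (i : ℕ) : MvPolynomial.eval 0 (Gv F u r i) = 0 := by
    unfold Gv; split_ifs <;> simp
  intro P hP
  rw [Eset_eq] at hP
  obtain (⟨i, -, rfl⟩ | ⟨i, -, rfl⟩) | ⟨m, -, rfl⟩ := hP
  · exact hA i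
  · exact hB i
  · simp only [quadRel, map_sub, map_sum, map_mul, hA, hG, zero_mul,
      Finset.sum_const_zero, sub_zero]

theorem span_Eset_ne_top : Ideal.span (Eset F u r k l) ≠ ⊤ :=
  span_ne_top_of_forall_eval_eq_zero 0 zero_mem_Xlocus

variable {D : Type*} [CommRing D] [Algebra F D] {φ : MvPolynomial (Vars u r) F →ₐ[F] D}

theorem exists_map_Av_eq_zero (hφ : ∀ P ∈ Eset F u r k l, φ P = 0) (n : ℕ) :
    ∃ i ≤ n, (∀ j, 1 ≤ j → j < k + i → φ (Av F u r j) = 0) ∧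
      (i < n → φ (Av F u r (k + i)) ≠ 0) := by
  obtain ⟨i, hin, hlt, hi⟩ := exists_le_forall_lt_eq_zero (fun j ↦ φ (Av F u r (k + j))) n
  refine ⟨i, hin, fun j hj1 hj ↦ ?_, hi⟩
  obtain hjk | hkj := lt_or_ge j k
  · exact hφ _ (Av_mem_Eset hj1 hjk)
  · simpa only [Nat.add_sub_cancel' hkj] using hlt (j - k) (by lia)

variable [IsDomain D]

theorem isAlgebraic_map_Av {i : ℕ} (hlt : ∀ j, 1 ≤ j → j < k + i → φ (Av F u r j) = 0)
    (hj : 1 ≤ j) :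
    IsAlgebraic ((MvPolynomial.supported F (freeVars u r (k + i) q : Set (Vars u r))).map φ)
      (φ (Av F u r j)) := by
  obtain h | h := lt_or_ge j (k + i)
  · rw [hlt j hj h]
    exact isAlgebraic_zero
  · exact isAlgebraic_map_of_mem φ (Av_mem_supported h)

theorem isAlgebraic_map_Bv (hk : 1 ≤ k) {i : ℕ}
    (hφ : ∀ P ∈ Eset F u r k l, φ P = 0)
    (hlt : ∀ j, 1 ≤ j → j < k + i → φ (Av F u r j) = 0)
    (hi : i < k + l - r → φ (Av F u r (k + i)) ≠ 0) (hj : 1 ≤ j) :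
    IsAlgebraic ((MvPolynomial.supported F (freeVars u r (k + i) (l - i) : Set (Vars u r))).map φ)
      (φ (Bv F u r j)) := by
  set K := (MvPolynomial.supported F (freeVars u r (k + i) (l - i) : Set (Vars u r))).map φ
  have hconv (m : ℕ) (hm : m < k + l - r) : IsAlgebraic K
      (∑ j ∈ Finset.range (m + 1), φ (Av F u r (k + j)) * φ (Bv F u r (r - k + (m - j)))) := by
    have hrel : φ (quadRel F u r k m) = 0 := hφ _ (quadRel_mem_Eset hm)
    simp only [quadRel, map_sub, map_sum, map_mul, sub_eq_zero] at hrel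
    rw [hrel]
    exact sum_mem (S := Subalgebra.algebraicClosure K D) fun j _ ↦
      mul_mem (isAlgebraic_map_of_mem φ Gv_mem_supported)
        (isAlgebraic_map_of_mem φ Hv_mem_supported)
  obtain hjl | hlj := le_or_gt (l - i) j
  · exact isAlgebraic_map_of_mem φ (Bv_mem_supported hjl)
  obtain hjr | hrj := lt_or_ge j (r - k)
  · rw [hφ _ (Bv_mem_Eset hj (by lia) hjr)]
    exact isAlgebraic_zero
  have := isAlgebraic_of_isAlgebraic_convolution (β := fun j ↦ φ (Bv F u r (r - k + j)))
    (fun j hj ↦ hlt (k + j) (by lia) (by lia)) hi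
    (fun j ↦ isAlgebraic_map_Av hlt (by lia)) hconv (j - (r - k)) (by lia)
  simpa only [Nat.add_sub_cancel' hrj] using this

theorem exists_isAlgebraic_map_X (hk : 1 ≤ k) (hφ : ∀ P ∈ Eset F u r k l, φ P = 0) :
    ∃ i ≤ k + l - r, ∀ v, IsAlgebraic
      ((MvPolynomial.supported F (freeVars u r (k + i) (l - i) : Set (Vars u r))).map φ)
      (φ (MvPolynomial.X v)) := by
  obtain ⟨i, hin, hlt, hi⟩ := exists_map_Av_eq_zero hφ (k + l - r)
  refine ⟨i, hin, fun v ↦ ?_⟩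
  obtain t | t | t := v
  · exact X_inl_eq_Av (F := F) t ▸ isAlgebraic_map_Av hlt (by lia)
  · exact X_inr_inl_eq_Bv (F := F) t ▸ isAlgebraic_map_Bv hk hφ hlt hi (by lia)
  · exact isAlgebraic_map_of_mem φ (MvPolynomial.X_mem_supported.mpr (inr_inr_mem_freeVars t))

end Relations

theorem ringKrullDim_quotient_span_Eset_le (F : Type*) [Field F] {u r k l : ℕ} (hk : 1 ≤ k)
    (hkr : k < r) (hl : 1 ≤ l) (hlu : l ≤ u - r) :
    ringKrullDim (MvPolynomial (Vars u r) F ⧸ Ideal.span (Eset F u r k l)) ≤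
      (4 * u - 3 * r - k - l : ℕ) := by
  refine ringKrullDim_le_of_forall_isPrime_quotient fun P hP ↦ ?_
  let φ := (Ideal.Quotient.mkₐ F P).comp (Ideal.Quotient.mkₐ F (Ideal.span (Eset F u r k l)))
  have hsurj : Function.Surjective φ :=
    Ideal.Quotient.mk_surjective.comp Ideal.Quotient.mk_surjective
  have hφ (p) (hp : p ∈ Eset F u r k l) : φ p = 0 := by
    have : Ideal.Quotient.mkₐ F (Ideal.span (Eset F u r k l)) p = 0 :=
      Ideal.Quotient.eq_zero_iff_mem.mpr (Ideal.subset_span hp)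
    rw [AlgHom.comp_apply, this, map_zero]
  obtain ⟨i, hi, halg⟩ := exists_isAlgebraic_map_X hk hφ
  have hcard : (freeVars u r (k + i) (l - i)).card = 4 * u - 3 * r - k - l := by
    rw [card_freeVars (by lia) (by lia) (by lia) (by lia)]
    lia
  exact hcard ▸ ringKrullDim_le_card_of_isAlgebraic hsurj _ halg

theorem statement2_general (F : Type*) [Field F] (u r k l : ℕ)
    (hk1 : 1 ≤ k) (hk2 : k < r) (hl1 : 1 ≤ l) (hl2 : l ≤ u - r) :
    (Eset F u r k l).ncard = k + l - 2 ∧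
      ringKrullDim (MvPolynomial (Vars u r) F ⧸ Ideal.span (Eset F u r k l)) =
        ((4 * u - 3 * r - k - l : ℕ) : WithBot ℕ∞) := by
  refine ncard_eq_and_ringKrullDim_eq_of_le span_Eset_ne_top (encard_Eset_le hk1 hk2 hl1)
    (ringKrullDim_quotient_span_Eset_le F hk1 hk2 hl1 hl2) ?_
  simp only [Vars, Nat.card_eq_fintype_card, Fintype.card_sum, Fintype.card_fin]
  lia

/-- `E^Q_{k,l}` consists of exactly `k+l−2` polynomials, and the quotient
of the polynomial ring in `N = 4u−3r−2` variables by the ideal generated by `E^Q_{k,l}`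
has Krull dimension `N − (k+l−2) = 4u−3r−k−l`; so the ideal is a complete intersection
ideal of height `k+l−2`. -/
theorem statement2 (F : Type*) [Field F] [Infinite F] (u r k l : ℕ)
    (hru : r < u) (hr : 2 ≤ r) (hk1 : 1 ≤ k) (hk2 : k ≤ r - 1)
    (hl1 : 1 ≤ l) (hl2 : l ≤ u - r) :
    (Eset F u r k l).ncard = k + l - 2 ∧
      ringKrullDim (MvPolynomial (Vars u r) F ⧸ Ideal.span (Eset F u r k l)) =
        ((4 * u - 3 * r - k - l : ℕ) : WithBot ℕ∞) :=
  statement2_general F u r k l hk1 (by lia) hl1 hl2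
end

section
/- Let F be a field and let u > r ≥ 1 be integers with u − r ≥ 1. Let a, g, h, b ∈ F[t] with deg a < u, deg g < u−r, deg h < u−r, deg b < u−r, and let M be the F-linear endomorphism of V = F[t]/(t^u) ⊕ t^r·F[t]/(t^u) given by M(v_1, v_2) = (a v_1 + g v_2, h t^r v_1 + b v_2). If a ≠ 0 and ord(a) ≤ r + min(ord(g), ord(h)), then dim_F ker(M) = min( ord(a·b − g·h·t^r), ord(a) + u − r ), where the order is taken in F[t] and ord(0) = +∞. -/
open Polynomial

/-!
Write `k = ord a`, `m = u - r` and `δ = a b - g h t^r`. The quotient `g t^r / a` need not be a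
multiple of `t^r`, so multiplication by it need not be defined on `F[t]/(t^m)` and `M` cannot in
general be diagonalised by elimination, but a Schur complement still computes `dim ker M`. Suppose
`a v + g t^r w = 0` in `F[t]/(t^u)`. Since `t^k ∣ h t^r`, multiplying by `h` gives
`a (h v + b w) = δ w` in `F[t]/(t^(k + m))`, and multiplication by `a` is injective from
`F[t]/(t^m)` to `F[t]/(t^(k + m))`. As `g t^r w` is always a multiple of `a` modulo `t^u`,
projecting `ker M` to the second coordinate gives an exact sequence
`0 → ker (a on F[t]/(t^u)) → ker M → ker (δ : F[t]/(t^m) → F[t]/(t^(k + m))) → 0`,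
whose outer terms have dimensions `k` and `min (ord δ) (k + m) - k`.
-/

section SchurComplement

variable {K V₁ V₂ W₁ W₂ : Type*} [DivisionRing K] [AddCommGroup V₁] [Module K V₁]
  [AddCommGroup V₂] [Module K V₂] [AddCommGroup W₁] [Module K W₁] [AddCommGroup W₂] [Module K W₂]

theorem finrank_eq_finrank_comap_inl_add_finrank_map_snd
    (N : Submodule K (V₁ × V₂)) [Module.Finite K N] :
    Module.finrank K N = Module.finrank K (N.comap (LinearMap.inl K V₁ V₂)) +
      Module.finrank K (N.map (LinearMap.snd K V₁ V₂)) := by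
  have hker : Module.finrank K (LinearMap.ker ((LinearMap.snd K V₁ V₂).domRestrict N)) =
      Module.finrank K (N.comap (LinearMap.inl K V₁ V₂)) := by
    rw [LinearMap.ker_domRestrict, ← Submodule.finrank_map_subtype_eq, ← LinearMap.range_inl,
      Submodule.map_comap_subtype, inf_comm, ← Submodule.map_comap_eq]
    exact (Submodule.equivMapOfInjective _ LinearMap.inl_injective _).finrank_eq.symm
  rw [← LinearMap.finrank_range_add_finrank_ker ((LinearMap.snd K V₁ V₂).domRestrict N), hker,
    LinearMap.range_domRestrict, add_comm]

/-- `S` stands for `U ∘ (D - C A⁻¹ B)`: the injective map `U` clears the denominators that keep the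
Schur complement from being defined when `A` is not invertible. -/
theorem finrank_ker_prod_coprod_eq_add {W₃ : Type*} [AddCommGroup W₃] [Module K W₃]
    [Module.Finite K V₁] [Module.Finite K V₂]
    (A : V₁ →ₗ[K] W₁) (B : V₂ →ₗ[K] W₁) (C : V₁ →ₗ[K] W₂) (D : V₂ →ₗ[K] W₂)
    {U : W₂ →ₗ[K] W₃} {S : V₂ →ₗ[K] W₃} (hU : Function.Injective U)
    (hBA : LinearMap.range B ≤ LinearMap.range A)
    (hS : ∀ v w, A v + B w = 0 → U (C v + D w) = S w) :
    Module.finrank K (LinearMap.ker ((A.coprod B).prod (C.coprod D))) =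
      Module.finrank K (LinearMap.ker A) + Module.finrank K (LinearMap.ker S) := by
  have hinl : (LinearMap.ker ((A.coprod B).prod (C.coprod D))).comap (LinearMap.inl K V₁ V₂) =
      LinearMap.ker A := by
    ext v
    have hC : A v = 0 → C v = 0 := fun hv ↦ by
      simpa [hv, map_eq_zero_iff U hU] using hS v 0
    simpa using hC
  have hsnd : (LinearMap.ker ((A.coprod B).prod (C.coprod D))).map (LinearMap.snd K V₁ V₂) =
      LinearMap.ker S := by
    ext w
    simp only [Submodule.mem_map, LinearMap.mem_ker, LinearMap.prod_apply, Prod.exists]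
    constructor
    · rintro ⟨v, w, hvw, rfl⟩
      obtain ⟨h₁, h₂⟩ := Prod.mk.inj hvw
      rw [LinearMap.coprod_apply] at h₁ h₂
      rw [LinearMap.snd_apply, ← hS v w h₁, h₂, map_zero]
    · intro hw
      obtain ⟨v, hv⟩ := hBA ⟨-w, rfl⟩
      have h₁ : A v + B w = 0 := by rw [hv, map_neg, neg_add_cancel]
      have h₂ : C v + D w = 0 := hU (by rw [hS v w h₁, hw, map_zero])
      exact ⟨v, w, Prod.ext h₁ h₂, rfl⟩
  rw [finrank_eq_finrank_comap_inl_add_finrank_map_snd, hinl, hsnd]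

end SchurComplement

section Order

theorem X_pow_dvd_iff_le_trailingDegree {R : Type*} [Semiring R] {n : ℕ} {p : R[X]} :
    X ^ n ∣ p ↔ (n : ℕ∞) ≤ p.trailingDegree := by
  refine ⟨fun h ↦ Finset.le_min fun d hd ↦ Nat.cast_le.2 (not_lt.1 fun hdn ↦ ?_),
    fun h ↦ X_pow_dvd_iff.2 fun d hd ↦
      coeff_eq_zero_of_lt_trailingDegree ((Nat.cast_lt.2 hd).trans_le h)⟩
  exact mem_support_iff.1 hd (X_pow_dvd_iff.1 h d hdn)

theorem trailingDegree_lt_of_degree_lt {R : Type*} [Semiring R] {n : ℕ} {p : R[X]} (hp : p ≠ 0)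
    (h : p.degree < n) : p.trailingDegree < n := by
  rw [trailingDegree_eq_natTrailingDegree hp, Nat.cast_lt]
  exact (natTrailingDegree_le_natDegree p).trans_lt ((natDegree_lt_iff_degree_lt hp).2 h)

theorem exists_X_pow_dvd_mul_sub_of_trailingDegree_le {F : Type*} [Field F]
    {a p : F[X]} (h : a.trailingDegree ≤ p.trailingDegree) (n : ℕ) : ∃ x, X ^ n ∣ a * x - p := by
  classical
  obtain ⟨i, -, hi⟩ := (dvd_prime_pow prime_X n).1 (EuclideanDomain.gcd_dvd_right a (X ^ n))
  have hia : X ^ i ∣ a := hi.symm.dvd.trans (EuclideanDomain.gcd_dvd_left a (X ^ n))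
  have hip : X ^ i ∣ p :=
    X_pow_dvd_iff_le_trailingDegree.2 ((X_pow_dvd_iff_le_trailingDegree.1 hia).trans h)
  obtain ⟨q, hq⟩ := hi.dvd.trans hip
  rw [EuclideanDomain.gcd_eq_gcd_ab] at hq
  refine ⟨EuclideanDomain.gcdA a (X ^ n) * q, -(EuclideanDomain.gcdB a (X ^ n) * q), ?_⟩
  linear_combination -hq

end Order

section TruncatedPolynomials

variable {F : Type*} [Field F] {m m' n : ℕ}

theorem PQ.mk_eq_zero_iff {x : F[X]} :
    (Submodule.Quotient.mk x : PQ F n) = 0 ↔ X ^ n ∣ x := by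
  rw [Submodule.Quotient.mk_eq_zero, Ideal.mem_span_singleton]

theorem PQ.finrank_eq : Module.finrank F (PQ F n) = n := by
  rw [finrank_quotient_span_eq_natDegree, natDegree_X_pow]

instance PQ.finite : Module.Finite F (PQ F n) := (monic_X_pow n).finite_quotient

theorem mulQ_mk (c : F[X]) (h : X ^ n ∣ c * X ^ m) (x : F[X]) :
    mulQ F m n c h (Submodule.Quotient.mk x) = Submodule.Quotient.mk (c * x) := rfl

theorem mulQ_mk_eq_zero_iff {c : F[X]} (h : X ^ n ∣ c * X ^ m) {x : F[X]} :
    mulQ F m n c h (Submodule.Quotient.mk x) = 0 ↔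
      (n : ℕ∞) - c.trailingDegree ≤ x.trailingDegree := by
  rw [mulQ_mk, PQ.mk_eq_zero_iff, X_pow_dvd_iff_le_trailingDegree, trailingDegree_mul,
    tsub_le_iff_left]

theorem mulQ_one_surjective (h : (X : F[X]) ^ n ∣ 1 * X ^ m) :
    Function.Surjective (mulQ F m n 1 h) := fun y ↦ by
  obtain ⟨y, rfl⟩ := Submodule.Quotient.mk_surjective _ y
  exact ⟨Submodule.Quotient.mk y, by rw [mulQ_mk, one_mul]⟩

theorem finrank_ker_mulQ {c : F[X]} (h : X ^ n ∣ c * X ^ m) :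
    (Module.finrank F (LinearMap.ker (mulQ F m n c h)) : ℕ∞) = m - (n - c.trailingDegree) := by
  obtain ⟨l, hl⟩ : ∃ l : ℕ, (l : ℕ∞) = n - c.trailingDegree :=
    ENat.ne_top_iff_exists.1 (ENat.sub_ne_top_iff.2 (.inl (ENat.natCast_ne_top n)))
  have hlm : l ≤ m := by
    rw [X_pow_dvd_iff_le_trailingDegree, trailingDegree_mul, trailingDegree_X_pow,
      ← tsub_le_iff_left, ← hl] at h
    exact_mod_cast h
  have hdvd : (X : F[X]) ^ l ∣ 1 * X ^ m := (pow_dvd_pow X hlm).mul_left 1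
  have hker : LinearMap.ker (mulQ F m n c h) = LinearMap.ker (mulQ F m l 1 hdvd) := by
    ext y
    obtain ⟨y, rfl⟩ := Submodule.Quotient.mk_surjective _ y
    simp only [LinearMap.mem_ker, mulQ_mk_eq_zero_iff, trailingDegree_one, tsub_zero, hl]
  have hrank := LinearMap.finrank_range_add_finrank_ker (mulQ F m l 1 hdvd)
  rw [LinearMap.range_eq_top.2 (mulQ_one_surjective hdvd), finrank_top, PQ.finrank_eq,
    PQ.finrank_eq] at hrank
  rw [hker, ← hl]
  norm_cast
  omega

theorem mulQ_injective {c : F[X]} (h : X ^ n ∣ c * X ^ m) (hn : (n : ℕ∞) = c.trailingDegree + m) :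
    Function.Injective (mulQ F m n c h) := by
  have hc : c.trailingDegree ≠ ⊤ := fun hc ↦ by simp [hc] at hn
  rw [injective_iff_map_eq_zero]
  intro y
  obtain ⟨y, rfl⟩ := Submodule.Quotient.mk_surjective _ y
  rw [mulQ_mk_eq_zero_iff, PQ.mk_eq_zero_iff, X_pow_dvd_iff_le_trailingDegree, hn,
    (ENat.addLECancellable_of_ne_top hc).add_tsub_cancel_left]
  exact id

theorem range_mulQ_le_range_mulQ {c d : F[X]} (hc : X ^ n ∣ c * X ^ m) (hd : X ^ n ∣ d * X ^ m')
    (hcd : c.trailingDegree ≤ d.trailingDegree) :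
    LinearMap.range (mulQ F m' n d hd) ≤ LinearMap.range (mulQ F m n c hc) := by
  rintro _ ⟨y, rfl⟩
  obtain ⟨y, rfl⟩ := Submodule.Quotient.mk_surjective _ y
  obtain ⟨x, hx⟩ := exists_X_pow_dvd_mul_sub_of_trailingDegree_le hcd n
  refine ⟨Submodule.Quotient.mk (x * y), ?_⟩
  rw [mulQ_mk, mulQ_mk, ← sub_eq_zero, ← Submodule.Quotient.mk_sub, PQ.mk_eq_zero_iff,
    ← mul_assoc, ← sub_mul]
  exact hx.mul_right y

end TruncatedPolynomials

section Determinant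

variable {R : Type*} [CommRing R] {u r k : ℕ} {a g h b : R[X]}

theorem X_pow_dvd_mul_sub_mul_mul_X_pow (ha : X ^ k ∣ a) (hg : X ^ k ∣ X ^ r * g) :
    X ^ k ∣ a * b - g * h * X ^ r := by
  have hgh : X ^ k ∣ g * h * X ^ r := by
    rw [mul_comm _ (X ^ r), ← mul_assoc]
    exact hg.mul_right h
  exact dvd_sub (ha.mul_right b) hgh

theorem X_pow_add_sub_dvd_mul (hru : r ≤ u) (hh : X ^ k ∣ X ^ r * h) {p : R[X]} (hp : X ^ u ∣ p) :
    X ^ (k + (u - r)) ∣ h * p := by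
  suffices hX : (X : R[X]) ^ r * X ^ (k + (u - r)) ∣ X ^ r * (h * p) from
    (isRegular_X_pow r).left.dvd_cancel_left.1 hX
  calc (X : R[X]) ^ r * X ^ (k + (u - r)) = X ^ k * X ^ u := by
        rw [← pow_add, ← pow_add, Nat.add_left_comm, Nat.add_sub_cancel' hru]
    _ ∣ X ^ r * h * p := mul_dvd_mul hh hp
    _ = X ^ r * (h * p) := mul_assoc ..

end Determinant

section Kernel

variable {F : Type*} [Field F] {u r k : ℕ} {a g h b : F[X]}

theorem finrank_ker_Mmap_eq_add (hru : r ≤ u) (hk : a.trailingDegree = k)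
    (hg : a.trailingDegree ≤ (X ^ r * g).trailingDegree) (hh : X ^ k ∣ X ^ r * h)
    (hdet : X ^ (k + (u - r)) ∣ (a * b - g * h * X ^ r) * X ^ (u - r)) :
    Module.finrank F (LinearMap.ker (Mmap F u r hru a g h b)) =
      Module.finrank F (LinearMap.ker (mulQ F u u a (dvd_A F u a))) +
      Module.finrank F (LinearMap.ker (mulQ F (u - r) (k + (u - r)) _ hdet)) := by
  have ha : X ^ (k + (u - r)) ∣ a * X ^ (u - r) := by
    rw [pow_add]
    exact mul_dvd_mul_right (X_pow_dvd_iff_le_trailingDegree.2 hk.ge) _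
  refine finrank_ker_prod_coprod_eq_add _ _ _ _ (U := mulQ F (u - r) (k + (u - r)) a ha)
    (mulQ_injective ha (by rw [hk, Nat.cast_add])) (range_mulQ_le_range_mulQ _ _ hg) ?_
  intro v w hvw
  obtain ⟨x, rfl⟩ := Submodule.Quotient.mk_surjective _ v
  obtain ⟨y, rfl⟩ := Submodule.Quotient.mk_surjective _ w
  have hxy : X ^ u ∣ a * x + X ^ r * g * y := PQ.mk_eq_zero_iff.1 hvw
  have hschur : a * (h * x + b * y) - (a * b - g * h * X ^ r) * y =
      h * (a * x + X ^ r * g * y) := by ring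
  simp only [mulQ_mk, ← Submodule.Quotient.mk_add]
  rw [← sub_eq_zero, ← Submodule.Quotient.mk_sub, PQ.mk_eq_zero_iff, hschur]
  exact X_pow_add_sub_dvd_mul hru hh hxy

end Kernel

theorem natCast_add_tsub_tsub_eq_min {k m : ℕ} {d : ℕ∞} (hd : (k : ℕ∞) ≤ d) :
    (k : ℕ∞) + (m - ((k + m : ℕ) - d)) = min d (k + m) := by
  obtain ⟨e, rfl⟩ := exists_add_of_le hd
  have hk : AddLECancellable (k : ℕ∞) := ENat.addLECancellable_of_ne_top (ENat.natCast_ne_top k)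
  rw [min_add_add_left, Nat.cast_add, ← tsub_tsub, hk.add_tsub_cancel_left,
    tsub_eq_tsub_min (m : ℕ∞) e, ENat.sub_sub_cancel (ENat.natCast_ne_top m) (min_le_left _ _),
    min_comm]

theorem statement3_general (F : Type*) [Field F] (u r : ℕ) (hru : r ≤ u) (a g h b : F[X])
    (hau : a.trailingDegree ≤ u)
    (hord : a.trailingDegree ≤ (r : ℕ∞) + min g.trailingDegree h.trailingDegree) :
    (Module.finrank F (LinearMap.ker (Mmap F u r hru a g h b)) : ℕ∞) =
      min (a * b - g * h * X ^ r).trailingDegree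
        (a.trailingDegree + ((u - r : ℕ) : ℕ∞)) := by
  obtain ⟨k, hk⟩ := ENat.ne_top_iff_exists.1 (ne_top_of_le_ne_top (ENat.natCast_ne_top u) hau)
  simp only [← min_add_add_left, le_min_iff, ← trailingDegree_X_pow (R := F) r,
    ← trailingDegree_mul] at hord
  obtain ⟨hg, hh⟩ := hord
  have hdet : X ^ k ∣ a * b - g * h * X ^ r := X_pow_dvd_mul_sub_mul_mul_X_pow
    (X_pow_dvd_iff_le_trailingDegree.2 hk.le)
    (X_pow_dvd_iff_le_trailingDegree.2 (hk.trans_le hg))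
  rw [finrank_ker_Mmap_eq_add hru hk.symm hg (X_pow_dvd_iff_le_trailingDegree.2 (hk.trans_le hh))
    (by rw [pow_add]; exact mul_dvd_mul_right hdet _), Nat.cast_add, finrank_ker_mulQ,
    finrank_ker_mulQ, ENat.sub_sub_cancel (ENat.natCast_ne_top u) hau, ← hk]
  exact natCast_add_tsub_tsub_eq_min (X_pow_dvd_iff_le_trailingDegree.1 hdet)

/-- If `a ≠ 0` and `ord(a) ≤ r + min(ord g, ord h)`, then the kernel of
the endomorphism `M(v₁,v₂) = (a v₁ + g v₂, h t^r v₁ + b v₂)` of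
`V = F[t]/(t^u) ⊕ t^r·F[t]/(t^u)` has dimension
`min( ord(a·b − g·h·t^r), ord(a) + u − r )`. -/
theorem statement3 (F : Type*) [Field F] (u r : ℕ) (hr : 1 ≤ r) (hru : r < u)
    (a g h b : F[X])
    (hda : a.degree < (u : ℕ)) (hdg : g.degree < ((u - r : ℕ)))
    (hdh : h.degree < ((u - r : ℕ))) (hdb : b.degree < ((u - r : ℕ)))
    (ha0 : a ≠ 0)
    (hord : a.trailingDegree ≤ (r : ℕ∞) + min g.trailingDegree h.trailingDegree) :
    (Module.finrank F (LinearMap.ker (Mmap F u r hru.le a g h b)) : ℕ∞) =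
      min (a * b - g * h * X ^ r).trailingDegree
        (a.trailingDegree + ((u - r : ℕ) : ℕ∞)) := by
  exact statement3_general F u r hru.le a g h b (trailingDegree_lt_of_degree_lt ha0 hda).le hord
end

section
/- Let F be an infinite field, let u > r ≥ 2 be integers, and let 1 ≤ k ≤ r−1 and 1 ≤ l ≤ u−r. A point x ∈ F^N lies in X^Q_{k,l} (i.e., every polynomial in E^Q_{k,l} vanishes at x) if and only if ord(a) ≥ k, ord(b) ≥ min(l, r−k), and ord(a·b − g·h·t^r) ≥ k+l, where a, b, g, h ∈ F[t] are the polynomials determined by x and ord(0) = +∞. -/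
open Polynomial

/-!
Put `s = r - k`. If `t^k ∣ a` and `t^s ∣ b`, then `t^r ∣ ab - ght^r`, and the coefficient of
`t^(r+m)` in `ab - ght^r` is `∑ a_{k+j} b_{s+m-j} - ∑ g_j h_{m-j}`, summed over `0 ≤ j ≤ m`, because
`a_i = 0` for `i < k` and `b_i = 0` for `i < s`. So once the linear equations hold, the quadratic
ones say exactly that the order of `ab - ght^r` is at least `k + l`. If `k + l ≤ r`, there are no
quadratic equations, and `t^k ∣ a`, `t^l ∣ b` already force this order to be at least `k + l`.
-/

section PolynomialOrder

variable {R : Type*}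

lemma natCast_le_trailingDegree_iff_X_pow_dvd [Semiring R] {n : ℕ} {p : R[X]} :
    (n : ℕ∞) ≤ p.trailingDegree ↔ X ^ n ∣ p := by
  rw [X_pow_dvd_iff]
  refine ⟨fun h d hd ↦ coeff_eq_zero_of_lt_trailingDegree (lt_of_lt_of_le (mod_cast hd) h),
    fun h ↦ Finset.le_min fun d hd ↦ ?_⟩
  exact Nat.cast_le.mpr (not_lt.mp fun hdn ↦ mem_support_iff.mp hd (h d hdn))

lemma X_pow_dvd_iff_of_coeff_zero_eq_zero [Semiring R] {n : ℕ} {p : R[X]} (hp : p.coeff 0 = 0) :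
    X ^ n ∣ p ↔ ∀ i, 1 ≤ i → i ≤ n - 1 → p.coeff i = 0 := by
  rw [X_pow_dvd_iff]
  refine ⟨fun h i _ hi ↦ h i (by lia), fun h i hi ↦ ?_⟩
  rcases Nat.eq_zero_or_pos i with rfl | hi_pos
  · exact hp
  · exact h i hi_pos (by lia)

lemma X_pow_add_dvd_iff_of_X_pow_dvd [Semiring R] {d n : ℕ} {p : R[X]} (hp : X ^ d ∣ p) :
    X ^ (d + n) ∣ p ↔ ∀ m < n, p.coeff (d + m) = 0 := by
  rw [X_pow_dvd_iff]
  refine ⟨fun h m hm ↦ h (d + m) (by lia), fun h i hi ↦ ?_⟩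
  rcases lt_or_ge i d with hid | hdi
  · exact X_pow_dvd_iff.mp hp i hid
  · obtain ⟨m, rfl⟩ := Nat.exists_eq_add_of_le hdi
    exact h m (by lia)

lemma coeff_mul_eq_sum_range [Semiring R] (p q : R[X]) (m : ℕ) :
    (p * q).coeff m = ∑ j ∈ Finset.range (m + 1), p.coeff j * q.coeff (m - j) := by
  rw [coeff_mul,
    Finset.Nat.sum_antidiagonal_eq_sum_range_succ (fun i j ↦ p.coeff i * q.coeff j)]

lemma coeff_mul_of_X_pow_dvd [Semiring R] {k s : ℕ} {a b : R[X]}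
    (ha : X ^ k ∣ a) (hb : X ^ s ∣ b) (m : ℕ) :
    (a * b).coeff (k + s + m) =
      ∑ j ∈ Finset.range (m + 1), a.coeff (k + j) * b.coeff (s + m - j) := by
  obtain ⟨a, rfl⟩ := ha
  obtain ⟨b, rfl⟩ := hb
  have hmul : X ^ k * a * (X ^ s * b) = X ^ (k + s) * (a * b) := by
    rw [mul_assoc, ← mul_assoc a, ← X_pow_mul, mul_assoc, ← mul_assoc, ← pow_add]
  rw [hmul, add_comm (k + s), coeff_X_pow_mul, coeff_mul_eq_sum_range]
  refine Finset.sum_congr rfl fun j hj ↦ ?_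
  have hindex : s + m - j = m - j + s := by
    have := Finset.mem_range.mp hj
    lia
  rw [hindex, add_comm k, coeff_X_pow_mul, coeff_X_pow_mul]

lemma X_pow_add_dvd_mul_sub_mul_X_pow_iff [CommRing R] {k s : ℕ} {a b : R[X]} (g h : R[X])
    (ha : X ^ k ∣ a) (hb : X ^ s ∣ b) (n : ℕ) :
    X ^ (k + s + n) ∣ a * b - g * h * X ^ (k + s) ↔
      ∀ m < n, ∑ j ∈ Finset.range (m + 1), a.coeff (k + j) * b.coeff (s + m - j) -
        ∑ j ∈ Finset.range (m + 1), g.coeff j * h.coeff (m - j) = 0 := by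
  have hdvd : X ^ (k + s) ∣ a * b - g * h * X ^ (k + s) :=
    dvd_sub (pow_add (X : R[X]) k s ▸ mul_dvd_mul ha hb) (dvd_mul_left _ _)
  have hcoeff (m : ℕ) : (g * h * X ^ (k + s)).coeff (k + s + m) =
      ∑ j ∈ Finset.range (m + 1), g.coeff j * h.coeff (m - j) := by
    rw [add_comm (k + s) m, coeff_mul_X_pow, coeff_mul_eq_sum_range]
  simp only [X_pow_add_dvd_iff_of_X_pow_dvd hdvd, coeff_sub, coeff_mul_of_X_pow_dvd ha hb, hcoeff]

lemma coeff_sum_fin_C_mul_X_pow [Semiring R] {n : ℕ} (c : Fin n → R) (i : ℕ) :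
    (∑ j : Fin n, C (c j) * X ^ (j : ℕ)).coeff i = if h : i < n then c ⟨i, h⟩ else 0 := by
  classical
  simp only [C_mul_X_pow_eq_monomial, ← ofFn_eq_sum_monomial]
  split_ifs with h
  · exact ofFn_coeff_eq_val_of_lt c h
  · exact ofFn_coeff_eq_zero_of_ge c (not_lt.mp h)

lemma sum_fin_C_mul_X_pow_succ [Semiring R] {n : ℕ} (c : Fin n → R) :
    ∑ j : Fin n, C (c j) * X ^ ((j : ℕ) + 1) = (∑ j : Fin n, C (c j) * X ^ (j : ℕ)) * X := by
  simp only [Finset.sum_mul, mul_assoc, pow_succ]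

end PolynomialOrder

section Coordinates

variable {F : Type*} [Field F] {u r : ℕ} (x : Vars u r → F)

lemma coeff_zero_paOf : (paOf F u r x).coeff 0 = 0 := by
  rw [paOf, sum_fin_C_mul_X_pow_succ (fun i ↦ x (.inl i)), coeff_mul_X_zero]

lemma coeff_zero_pbOf : (pbOf F u r x).coeff 0 = 0 := by
  rw [pbOf, sum_fin_C_mul_X_pow_succ (fun i ↦ x (.inr (.inl i))), coeff_mul_X_zero]

lemma eval_Av {i : ℕ} (hi : 1 ≤ i) : (Av F u r i).eval x = (paOf F u r x).coeff i := by
  obtain ⟨i, rfl⟩ := Nat.exists_eq_add_of_le' hi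
  rw [paOf, sum_fin_C_mul_X_pow_succ (fun i ↦ x (.inl i)), coeff_mul_X,
    coeff_sum_fin_C_mul_X_pow (fun i ↦ x (.inl i)), Av]
  simp only [Nat.add_sub_cancel]
  split_ifs <;> simp

lemma eval_Bv {i : ℕ} (hi : 1 ≤ i) : (Bv F u r i).eval x = (pbOf F u r x).coeff i := by
  obtain ⟨i, rfl⟩ := Nat.exists_eq_add_of_le' hi
  rw [pbOf, sum_fin_C_mul_X_pow_succ (fun i ↦ x (.inr (.inl i))), coeff_mul_X,
    coeff_sum_fin_C_mul_X_pow (fun i ↦ x (.inr (.inl i))), Bv]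
  simp only [Nat.add_sub_cancel]
  split_ifs <;> simp

lemma eval_Gv (i : ℕ) : (Gv F u r i).eval x = (pgOf F u r x).coeff i := by
  rw [pgOf, coeff_sum_fin_C_mul_X_pow (fun i ↦ x (.inr (.inr (.inl i)))), Gv]
  split_ifs <;> simp

lemma eval_Hv (i : ℕ) : (Hv F u r i).eval x = (phOf F u r x).coeff i := by
  rw [phOf, coeff_sum_fin_C_mul_X_pow (fun i ↦ x (.inr (.inr (.inr i)))), Hv]
  split_ifs <;> simp

lemma eval_sum_Av_mul_Bv_sub_sum_Gv_mul_Hv {k s : ℕ} (hk : 1 ≤ k) (hs : 1 ≤ s) (m : ℕ) :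
    (∑ j ∈ Finset.range (m + 1), Av F u r (k + j) * Bv F u r (s + m - j) -
      ∑ j ∈ Finset.range (m + 1), Gv F u r j * Hv F u r (m - j)).eval x =
    ∑ j ∈ Finset.range (m + 1), (paOf F u r x).coeff (k + j) * (pbOf F u r x).coeff (s + m - j) -
      ∑ j ∈ Finset.range (m + 1), (pgOf F u r x).coeff j * (phOf F u r x).coeff (m - j) := by
  simp only [map_sub, map_sum, map_mul, eval_Gv, eval_Hv]
  congr 1
  refine Finset.sum_congr rfl fun j hj ↦ ?_
  have := Finset.mem_range.mp hj
  rw [eval_Av x (by lia), eval_Bv x (by lia)]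

end Coordinates

section Locus

variable {F : Type*} [Field F] {u r k l n s : ℕ} {x : Vars u r → F}

lemma mem_zLocus_union {S T : Set (MvPolynomial (Vars u r) F)} :
    x ∈ zLocus F u r (S ∪ T) ↔ x ∈ zLocus F u r S ∧ x ∈ zLocus F u r T :=
  ⟨fun hx ↦ ⟨fun p hp ↦ hx p (.inl hp), fun p hp ↦ hx p (.inr hp)⟩,
    fun hx p hp ↦ hp.elim (hx.1 p) (hx.2 p)⟩

lemma mem_zLocus_iff_X_pow_dvd {v : ℕ → MvPolynomial (Vars u r) F} {p : F[X]}
    (hp : p.coeff 0 = 0) (hv : ∀ {i}, 1 ≤ i → (v i).eval x = p.coeff i) :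
    x ∈ zLocus F u r {q | ∃ i, 1 ≤ i ∧ i ≤ n - 1 ∧ q = v i} ↔ X ^ n ∣ p := by
  rw [X_pow_dvd_iff_of_coeff_zero_eq_zero hp]
  constructor
  · intro hx i hi hin
    exact hv hi ▸ hx _ ⟨i, hi, hin, rfl⟩
  · rintro hx _ ⟨i, hi, hin, rfl⟩
    exact (hv hi).trans (hx i hi hin)

lemma mem_zLocus_Av_iff :
    x ∈ zLocus F u r {p | ∃ i, 1 ≤ i ∧ i ≤ n - 1 ∧ p = Av F u r i} ↔ X ^ n ∣ paOf F u r x :=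
  mem_zLocus_iff_X_pow_dvd (coeff_zero_paOf x) (eval_Av x)

lemma mem_zLocus_Bv_iff :
    x ∈ zLocus F u r {p | ∃ i, 1 ≤ i ∧ i ≤ n - 1 ∧ p = Bv F u r i} ↔ X ^ n ∣ pbOf F u r x :=
  mem_zLocus_iff_X_pow_dvd (coeff_zero_pbOf x) (eval_Bv x)

lemma mem_zLocus_quadrics_iff (hk : 1 ≤ k) (hs : 1 ≤ s)
    (ha : X ^ k ∣ paOf F u r x) (hb : X ^ s ∣ pbOf F u r x) :
    x ∈ zLocus F u r {p | ∃ m, m ≤ n ∧ p =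
        (∑ j ∈ Finset.range (m + 1), Av F u r (k + j) * Bv F u r (s + m - j)) -
          (∑ j ∈ Finset.range (m + 1), Gv F u r j * Hv F u r (m - j))} ↔
      X ^ (k + s + (n + 1)) ∣
        paOf F u r x * pbOf F u r x - pgOf F u r x * phOf F u r x * X ^ (k + s) := by
  rw [X_pow_add_dvd_mul_sub_mul_X_pow_iff _ _ ha hb]
  simp only [← eval_sum_Av_mul_Bv_sub_sum_Gv_mul_Hv x hk hs]
  constructor
  · intro hx m hm
    exact hx _ ⟨m, Nat.lt_succ_iff.mp hm, rfl⟩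
  · rintro hx _ ⟨m, hm, rfl⟩
    exact hx m (Nat.lt_succ_of_le hm)

lemma mem_Xlocus_iff_of_add_le (hkl : k + l ≤ r) :
    x ∈ Xlocus F u r k l ↔ X ^ k ∣ paOf F u r x ∧ X ^ l ∣ pbOf F u r x := by
  rw [Xlocus, Eset, if_pos hkl, mem_zLocus_union, mem_zLocus_Av_iff, mem_zLocus_Bv_iff]

lemma mem_Xlocus_iff_of_lt_add (hk : 1 ≤ k) (hkr : k < r) (hkl : r < k + l) :
    x ∈ Xlocus F u r k l ↔ X ^ k ∣ paOf F u r x ∧ X ^ (r - k) ∣ pbOf F u r x ∧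
      X ^ (k + l) ∣ paOf F u r x * pbOf F u r x - pgOf F u r x * phOf F u r x * X ^ r := by
  rw [Xlocus, Eset, if_neg hkl.not_ge, mem_zLocus_union, mem_zLocus_union, mem_zLocus_Av_iff,
    mem_zLocus_Bv_iff, and_assoc]
  refine and_congr_right fun ha ↦ and_congr_right fun hb ↦ ?_
  have hr : k + (r - k) = r := by lia
  have hexp : r + (k + l - r - 1 + 1) = k + l := by lia
  rw [mem_zLocus_quadrics_iff hk (by lia) ha hb, hr, hexp]

end Locus

theorem statement4_general (F : Type*) [Field F] (u r k l : ℕ) (hk : 1 ≤ k) (hkr : k < r)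
    (x : Vars u r → F) :
    x ∈ Xlocus F u r k l ↔
      ((k : ℕ∞) ≤ (paOf F u r x).trailingDegree ∧
        ((min l (r - k) : ℕ) : ℕ∞) ≤ (pbOf F u r x).trailingDegree ∧
        ((k + l : ℕ) : ℕ∞) ≤
          (paOf F u r x * pbOf F u r x -
            pgOf F u r x * phOf F u r x * X ^ r).trailingDegree) := by
  simp only [natCast_le_trailingDegree_iff_X_pow_dvd]
  rcases le_or_gt (k + l) r with hkl | hkl
  · rw [min_eq_left (by lia), mem_Xlocus_iff_of_add_le hkl]
    refine and_congr_right fun ha ↦ (and_iff_left_of_imp fun hb ↦ ?_).symm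
    have hab : X ^ (k + l) ∣ paOf F u r x * pbOf F u r x :=
      pow_add (X : F[X]) k l ▸ mul_dvd_mul ha hb
    exact dvd_sub hab (dvd_mul_of_dvd_right (pow_dvd_pow X hkl) _)
  · rw [min_eq_right (by lia), mem_Xlocus_iff_of_lt_add hk hkr hkl]

/-- A point `x ∈ F^N` lies in `X^Q_{k,l}` if and only if `ord(a) ≥ k`,
`ord(b) ≥ min(l, r−k)` and `ord(a·b − g·h·t^r) ≥ k+l`, where `a, b, g, h` are the
polynomials determined by `x` (and `ord 0 = +∞`). -/
theorem statement4 (F : Type*) [Field F] [Infinite F] (u r k l : ℕ)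
    (hru : r < u) (hr : 2 ≤ r) (hk1 : 1 ≤ k) (hk2 : k ≤ r - 1)
    (hl1 : 1 ≤ l) (hl2 : l ≤ u - r) (x : Vars u r → F) :
    x ∈ Xlocus F u r k l ↔
      ((k : ℕ∞) ≤ (paOf F u r x).trailingDegree ∧
        ((min l (r - k) : ℕ) : ℕ∞) ≤ (pbOf F u r x).trailingDegree ∧
        ((k + l : ℕ) : ℕ∞) ≤
          (paOf F u r x * pbOf F u r x -
            pgOf F u r x * phOf F u r x * X ^ r).trailingDegree) :=
  statement4_general F u r k l hk1 (by lia) x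
end

section
/- Let F be a field, let k, l, r be natural numbers, and let M be a 2×2 matrix with entries in the formal power series ring F[[t]] such that ord(M_{1,1}) ≥ k, ord(M_{2,1}) ≥ r and ord(M_{2,2}) ≥ l (no condition on M_{1,2}). Then for every even integer s ≥ 2: ord((M^s)_{1,1}) ≥ min( s·k, (s/2)·r, (s−2)·l + r ); ord((M^s)_{1,2}) ≥ min( (s−1)·k, k + ((s−2)/2)·r, l + ((s−2)/2)·r, (s−1)·l ); ord((M^s)_{2,1}) ≥ min( (s−1)·k + r, k + (s/2)·r, l + (s/2)·r, (s−1)·l + r ); ord((M^s)_{2,2}) ≥ min( (s−2)·k + r, (s/2)·r, s·l ). -/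
open Polynomial

/-!
An entry of `M ^ (2 * m)` is a sum over walks of `m` steps for `M ^ 2`. In `M ^ 2` every loop gains
order at least `c = min (2 * k) (min (2 * l) r)`, and a closed walk that leaves its base point
crosses once in each direction, gaining `r + 2 * min k l ≥ r + c` for these two steps. Counting
`c / 2` per step of `M` instead would lose `min k l - c / 2` off the diagonal.
-/

section OrderOfMatrixPowers

open scoped PowerSeries

variable {R : Type*} [Semiring R]

lemma le_order_mul_apply_fin_two {m n : Type*} {A : Matrix m (Fin 2) R⟦X⟧}
    {B : Matrix (Fin 2) n R⟦X⟧} {x : m} {y : n} {i j : Fin 2} (hij : i ≠ j) {a b a' b' : ℕ}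
    (ha : (a : ℕ∞) ≤ (A x i).order) (hb : (b : ℕ∞) ≤ (B i y).order)
    (ha' : (a' : ℕ∞) ≤ (A x j).order) (hb' : (b' : ℕ∞) ≤ (B j y).order) :
    ((min (a + b) (a' + b') : ℕ) : ℕ∞) ≤ ((A * B) x y).order := by
  have entry : (A * B) x y = A x i * B i y + A x j * B j y := by
    rw [Matrix.mul_apply]
    exact Fintype.sum_eq_add i j hij fun z hz => by omega
  rw [entry]
  calc min ((a : ℕ∞) + b) (a' + b')
      ≤ min ((A x i).order + (B i y).order) ((A x j).order + (B j y).order) :=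
        min_le_min (add_le_add ha hb) (add_le_add ha' hb')
    _ ≤ min (A x i * B i y).order (A x j * B j y).order :=
        min_le_min (PowerSeries.le_order_mul _ _) (PowerSeries.le_order_mul _ _)
    _ ≤ _ := PowerSeries.min_order_le_order_add _ _

variable {M : Matrix (Fin 2) (Fin 2) R⟦X⟧} {i j : Fin 2}

lemma le_order_sq_apply_self (hij : i ≠ j) {k b b' : ℕ} (hii : (k : ℕ∞) ≤ (M i i).order)
    (hb : (b : ℕ∞) ≤ (M i j).order) (hb' : (b' : ℕ∞) ≤ (M j i).order) :
    ((min (2 * k) (b + b') : ℕ) : ℕ∞) ≤ ((M ^ 2) i i).order := by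
  rw [pow_two, two_mul]
  exact le_order_mul_apply_fin_two hij hii hii hb hb'

lemma le_order_sq_apply_of_ne (hij : i ≠ j) {k l b : ℕ} (hii : (k : ℕ∞) ≤ (M i i).order)
    (hb : (b : ℕ∞) ≤ (M i j).order) (hjj : (l : ℕ∞) ≤ (M j j).order) :
    ((b + min k l : ℕ) : ℕ∞) ≤ ((M ^ 2) i j).order := by
  rw [pow_two, ← min_add_add_left, add_comm b k]
  exact le_order_mul_apply_fin_two hij hii hb hb hjj

/-- A round trip through `j` takes two of the `n + 1` steps and gains `e + c`, whereas the other
steps gain at least `c` each. -/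
lemma le_order_pow_succ_apply (hij : i ≠ j) {p b b' c e : ℕ} (hii : (p : ℕ∞) ≤ (M i i).order)
    (hb : (b : ℕ∞) ≤ (M i j).order) (hb' : (b' : ℕ∞) ≤ (M j i).order)
    (hjj : (c : ℕ∞) ≤ (M j j).order) (hcp : c ≤ p) (hce : c ≤ e) (hec : e + c ≤ b + b') (n : ℕ) :
    ((min ((n + 1) * p) (e + n * c) : ℕ) : ℕ∞) ≤ ((M ^ (n + 1)) i i).order ∧
      ((b + n * c : ℕ) : ℕ∞) ≤ ((M ^ (n + 1)) i j).order := by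
  induction n with
  | zero =>
    rw [zero_add, pow_one, one_mul, zero_mul, add_zero, add_zero]
    exact ⟨(Nat.cast_le.2 (min_le_left p e)).trans hii, hb⟩
  | succ n ih =>
    obtain ⟨ih_diag, ih_off⟩ := ih
    have hncp : (n + 1) * c ≤ (n + 1) * p := Nat.mul_le_mul_left _ hcp
    rw [pow_succ M (n + 1)]
    constructor
    · refine le_trans (Nat.cast_le.2 ?_) (le_order_mul_apply_fin_two hij ih_diag hii ih_off hb')
      grind
    · refine le_trans (Nat.cast_le.2 ?_) (le_order_mul_apply_fin_two hij ih_diag hb ih_off hjj)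
      grind

lemma min_le_min_mul_min_add_mul_min (n k l g : ℕ) :
    min (2 * (n + 1) * k) (min ((n + 1) * g) (2 * n * l + g)) ≤
      min ((n + 1) * min (2 * k) g) (g + n * min (2 * k) (min (2 * l) g)) := by
  refine le_min ?_ ?_
  · rcases min_choice (2 * k) g with h | h <;> rw [h] <;> lia
  · generalize hc : min (2 * k) (min (2 * l) g) = c
    obtain ⟨hcg, rfl | rfl | rfl⟩ : c ≤ g ∧ (c = 2 * k ∨ c = 2 * l ∨ c = g) := by omega
    -- For `c = 2 * k ≤ g` the first bound applies: `g + n * c ≥ (n + 1) * (2 * k)`.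
    all_goals clear hc; lia

lemma min_le_min_add_mul_min (n k l g : ℕ) :
    min ((2 * n + 1) * k) (min (k + n * g) (min (l + n * g) ((2 * n + 1) * l))) ≤
      min k l + n * min (2 * k) (min (2 * l) g) := by
  generalize hc : min (2 * k) (min (2 * l) g) = c
  obtain ⟨hc, hkl⟩ | ⟨hc, hkl⟩ | hc : (c = 2 * k ∧ min k l = k) ∨
      (c = 2 * l ∧ min k l = l) ∨ c = g := by omega
  · rw [hc, hkl]
    lia
  · rw [hc, hkl]
    lia
  · rw [hc]
    lia

theorem le_order_even_pow_apply (hij : i ≠ j) {k l b b' : ℕ} (hii : (k : ℕ∞) ≤ (M i i).order)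
    (hb : (b : ℕ∞) ≤ (M i j).order) (hb' : (b' : ℕ∞) ≤ (M j i).order)
    (hjj : (l : ℕ∞) ≤ (M j j).order) (n : ℕ) :
    ((min (2 * (n + 1) * k) (min ((n + 1) * (b + b')) (2 * n * l + (b + b'))) : ℕ) : ℕ∞) ≤
        ((M ^ (2 * (n + 1))) i i).order ∧
      ((b + min ((2 * n + 1) * k) (min (k + n * (b + b'))
        (min (l + n * (b + b')) ((2 * n + 1) * l))) : ℕ) : ℕ∞) ≤
          ((M ^ (2 * (n + 1))) i j).order := by
  set c := min (2 * k) (min (2 * l) (b + b'))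
  have sq_jj : (c : ℕ∞) ≤ ((M ^ 2) j j).order :=
    (Nat.cast_le.2 (by omega)).trans (le_order_sq_apply_self hij.symm hjj hb' hb)
  obtain ⟨diag, off⟩ := le_order_pow_succ_apply hij (e := b + b')
    (le_order_sq_apply_self hij hii hb hb') (le_order_sq_apply_of_ne hij hii hb hjj)
    (le_order_sq_apply_of_ne hij.symm hjj hb' hii) sq_jj (by omega) (by omega) (by omega) n
  rw [pow_mul]
  refine ⟨(Nat.cast_le.2 (min_le_min_mul_min_add_mul_min n k l _)).trans diag,
    (Nat.cast_le.2 ?_).trans off⟩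
  rw [add_assoc]
  exact Nat.add_le_add_left (min_le_min_add_mul_min n k l _) b

end OrderOfMatrixPowers

theorem statement5_general {R : Type*} [Semiring R] (k l r : ℕ)
    (M : Matrix (Fin 2) (Fin 2) (PowerSeries R))
    (h11 : (k : ℕ∞) ≤ (M 0 0).order) (h21 : (r : ℕ∞) ≤ (M 1 0).order)
    (h22 : (l : ℕ∞) ≤ (M 1 1).order)
    (s : ℕ) (hs2 : 2 ≤ s) (hse : Even s) :
    ((min (s * k) (min (s / 2 * r) ((s - 2) * l + r)) : ℕ) : ℕ∞) ≤ ((M ^ s) 0 0).order ∧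
    ((min ((s - 1) * k) (min (k + (s - 2) / 2 * r)
        (min (l + (s - 2) / 2 * r) ((s - 1) * l))) : ℕ) : ℕ∞) ≤ ((M ^ s) 0 1).order ∧
    ((min ((s - 1) * k + r) (min (k + s / 2 * r)
        (min (l + s / 2 * r) ((s - 1) * l + r))) : ℕ) : ℕ∞) ≤ ((M ^ s) 1 0).order ∧
    ((min ((s - 2) * k + r) (min (s / 2 * r) (s * l)) : ℕ) : ℕ∞) ≤ ((M ^ s) 1 1).order := by
  obtain ⟨n, rfl⟩ : ∃ n, s = 2 * (n + 1) := by
    obtain ⟨m, rfl⟩ := hse.two_dvd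
    exact ⟨m - 1, by omega⟩
  have half : 2 * (n + 1) / 2 = n + 1 := by omega
  have sub_two : 2 * (n + 1) - 2 = 2 * n := by omega
  have sub_one : 2 * (n + 1) - 1 = 2 * n + 1 := by omega
  have half_sub : 2 * n / 2 = n := by omega
  have h12 : ((0 : ℕ) : ℕ∞) ≤ (M 0 1).order := by simp
  obtain ⟨le00, le01⟩ := le_order_even_pow_apply zero_ne_one h11 h12 h21 h22 n
  obtain ⟨le11, le10⟩ := le_order_even_pow_apply one_ne_zero h22 h21 h12 h11 n
  rw [half, sub_two, sub_one, half_sub]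
  simp only [zero_add, add_zero] at le00 le01 le10 le11
  refine ⟨le00, le01, (Nat.cast_le.2 ?_).trans le10, (Nat.cast_le.2 ?_).trans le11⟩ <;> grind

/-- even powers. Tropical lower bounds for the orders of the entries
of `M^s`, for `M` a `2×2` matrix over `F[[t]]` with `ord M₁₁ ≥ k`, `ord M₂₁ ≥ r`,
`ord M₂₂ ≥ l` and `s ≥ 2` even. -/
theorem statement5 (F : Type*) [Field F] (k l r : ℕ)
    (M : Matrix (Fin 2) (Fin 2) (PowerSeries F))
    (h11 : (k : ℕ∞) ≤ (M 0 0).order) (h21 : (r : ℕ∞) ≤ (M 1 0).order)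
    (h22 : (l : ℕ∞) ≤ (M 1 1).order)
    (s : ℕ) (hs2 : 2 ≤ s) (hse : Even s) :
    ((min (s * k) (min (s / 2 * r) ((s - 2) * l + r)) : ℕ) : ℕ∞) ≤ ((M ^ s) 0 0).order ∧
    ((min ((s - 1) * k) (min (k + (s - 2) / 2 * r)
        (min (l + (s - 2) / 2 * r) ((s - 1) * l))) : ℕ) : ℕ∞) ≤ ((M ^ s) 0 1).order ∧
    ((min ((s - 1) * k + r) (min (k + s / 2 * r)
        (min (l + s / 2 * r) ((s - 1) * l + r))) : ℕ) : ℕ∞) ≤ ((M ^ s) 1 0).order ∧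
    ((min ((s - 2) * k + r) (min (s / 2 * r) (s * l)) : ℕ) : ℕ∞) ≤ ((M ^ s) 1 1).order :=
  statement5_general k l r M h11 h21 h22 s hs2 hse
end

section
/- Let F be a field, let k, l, r be natural numbers, and let M be a 2×2 matrix with entries in the formal power series ring F[[t]] such that ord(M_{1,1}) ≥ k, ord(M_{2,1}) ≥ r and ord(M_{2,2}) ≥ l (no condition on M_{1,2}). Then for every odd integer s ≥ 3: ord((M^s)_{1,1}) ≥ min( s·k, k + ((s−1)/2)·r, l + ((s−1)/2)·r, (s−2)·l + r ); ord((M^s)_{1,2}) ≥ min( (s−1)·k, ((s−1)/2)·r, (s−1)·l ); ord((M^s)_{2,1}) ≥ min( (s−1)·k + r, ((s+1)/2)·r, (s−1)·l + r ); ord((M^s)_{2,2}) ≥ min( (s−2)·k + r, k + ((s−1)/2)·r, l + ((s−1)/2)·r, s·l ). -/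
open Polynomial

/-!
The order of a power series behaves like a valuation, so the `(i, j)` entry of `M ^ s` has order at
least the least weight of a walk of length `s` from `i` to `j` in the two-vertex graph whose edges
carry the lower bounds for the orders of the entries of `M`. Such a walk splits into loops, each of
weight at least `q = min k l`, and two-cycles of weight `r`, with one unpaired crossing if `i ≠ j`.
Trading two loops for one two-cycle, the cheapest way to fill the length `2m` costs
`m * min (2q) r`, and length `2m + 1` costs `q` more. A closed walk at a vertex either repeats the
loop there or contains a two-cycle.
-/

section CycleWeight

/-- The least total weight of a collection of loops (length `1`, weight `q`) and two-cycles
(length `2`, weight `c`) of total length `n`. The recursion encodes that an optimal collection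
fills each pair of steps in the same way, with two loops or with one two-cycle. -/
def minCycleWeight (q c : ℕ) : ℕ → ℕ
  | 0 => 0
  | 1 => q
  | n + 2 => minCycleWeight q c n + min (2 * q) c

variable (q c : ℕ)

theorem minCycleWeight_succ_le (n : ℕ) :
    minCycleWeight q c (n + 1) ≤ minCycleWeight q c n + q := by
  induction n using Nat.twoStepInduction with
  | zero => simp [minCycleWeight]
  | one =>
    simp only [minCycleWeight]
    omega
  | more n ih _ =>
    simp only [minCycleWeight] at ih ⊢
    omega

theorem minCycleWeight_add_two_le (n : ℕ) :
    minCycleWeight q c (n + 2) ≤ minCycleWeight q c n + c :=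
  Nat.add_le_add_left (min_le_right _ _) _

theorem minCycleWeight_two_mul (m : ℕ) : minCycleWeight q c (2 * m) = m * min (2 * q) c := by
  induction m with
  | zero => simp [minCycleWeight]
  | succ m ih => rw [mul_add_one, minCycleWeight, ih, add_one_mul m]

theorem minCycleWeight_two_mul_add_one (m : ℕ) :
    minCycleWeight q c (2 * m + 1) = q + m * min (2 * q) c := by
  induction m with
  | zero => simp [minCycleWeight]
  | succ m ih =>
    rw [show 2 * (m + 1) + 1 = 2 * m + 1 + 2 by ring, minCycleWeight, ih]
    ring

theorem minCycleWeight_min_two_mul (k l m : ℕ) :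
    minCycleWeight (min k l) c (2 * m) = min (2 * m * k) (min (m * c) (2 * m * l)) := by
  rw [minCycleWeight_two_mul, ← Nat.mul_min_mul_left, ← Nat.mul_min_mul_left,
    ← Nat.mul_min_mul_left, mul_left_comm m 2 k, mul_left_comm m 2 l, ← mul_assoc, ← mul_assoc,
    min_assoc, min_comm (2 * m * l)]

/-- The term `(2 * m + 1) * k + c` that the left-hand side lacks lies between `(2 * m + 3) * k`
and `k + (m + 1) * c`. -/
theorem min_le_min_minCycleWeight_two_mul_add_one (k l m : ℕ) :
    min ((2 * m + 3) * k)
        (min (k + (m + 1) * c) (min (l + (m + 1) * c) ((2 * m + 1) * l + c))) ≤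
      min ((2 * m + 3) * k) (c + minCycleWeight (min k l) c (2 * m + 1)) := by
  refine le_min (min_le_left _ _) ?_
  rw [minCycleWeight_two_mul_add_one]
  rcases le_total k l with hkl | hlk
  · rw [min_eq_left hkl]
    rcases le_total (2 * k) c with hkc | hck
    · calc _ ≤ (2 * m + 3) * k := min_le_left _ _
        _ = 2 * k + (k + m * (2 * k)) := by ring
        _ ≤ c + (k + m * min (2 * k) c) := by rw [min_eq_left hkc]; gcongr
    · calc _ ≤ k + (m + 1) * c := (min_le_right _ _).trans (min_le_left _ _)
        _ = c + (k + m * min (2 * k) c) := by rw [min_eq_right hck]; ring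
  · rw [min_eq_right hlk]
    rcases le_total (2 * l) c with hlc | hcl
    · calc _ ≤ (2 * m + 1) * l + c := by simp
        _ = c + (l + m * min (2 * l) c) := by rw [min_eq_left hlc]; ring
    · calc _ ≤ l + (m + 1) * c := by simp
        _ = c + (l + m * min (2 * l) c) := by rw [min_eq_right hcl]; ring

end CycleWeight

section PowerSeriesMatrix

open PowerSeries

variable {R : Type*} [Semiring R]

theorem le_order_mul_add_mul {a b a' b' : R⟦X⟧} {i j i' j' n : ℕ}
    (ha : (i : ℕ∞) ≤ a.order) (hb : (j : ℕ∞) ≤ b.order)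
    (ha' : (i' : ℕ∞) ≤ a'.order) (hb' : (j' : ℕ∞) ≤ b'.order)
    (hn : n ≤ i + j) (hn' : n ≤ i' + j') : (n : ℕ∞) ≤ (a * b + a' * b').order := by
  refine le_trans (le_min ?_ ?_) (min_order_le_order_add _ _)
  · calc (n : ℕ∞) ≤ i + j := mod_cast hn
      _ ≤ a.order + b.order := add_le_add ha hb
      _ ≤ (a * b).order := le_order_mul a b
  · calc (n : ℕ∞) ≤ i' + j' := mod_cast hn'
      _ ≤ a'.order + b'.order := add_le_add ha' hb'
      _ ≤ (a' * b').order := le_order_mul a' b'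

variable {M : Matrix (Fin 2) (Fin 2) R⟦X⟧} {k g r l : ℕ}

theorem minCycleWeight_le_order_pow_succ
    (h11 : (k : ℕ∞) ≤ (M 0 0).order) (h12 : (g : ℕ∞) ≤ (M 0 1).order)
    (h21 : (r : ℕ∞) ≤ (M 1 0).order) (h22 : (l : ℕ∞) ≤ (M 1 1).order) (n : ℕ) :
    (minCycleWeight (min k l) (g + r) (n + 1) : ℕ∞) ≤ ((M ^ (n + 1)) 0 0).order ∧
    ((g + minCycleWeight (min k l) (g + r) n : ℕ) : ℕ∞) ≤ ((M ^ (n + 1)) 0 1).order ∧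
    ((r + minCycleWeight (min k l) (g + r) n : ℕ) : ℕ∞) ≤ ((M ^ (n + 1)) 1 0).order ∧
    (minCycleWeight (min k l) (g + r) (n + 1) : ℕ∞) ≤ ((M ^ (n + 1)) 1 1).order := by
  induction n with
  | zero =>
    simp only [minCycleWeight, zero_add, pow_one, add_zero]
    exact ⟨le_trans (mod_cast min_le_left k l) h11, h12, h21,
      le_trans (mod_cast min_le_right k l) h22⟩
  | succ n ih =>
    obtain ⟨ih11, ih12, ih21, ih22⟩ := ih
    have hloop := minCycleWeight_succ_le (min k l) (g + r)
    have hloop_n := hloop n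
    have hloop_succ := hloop (n + 1)
    have hcycle : minCycleWeight (min k l) (g + r) (n + 1 + 1) ≤ _ :=
      minCycleWeight_add_two_le (min k l) (g + r) n
    simp only [pow_succ M (n + 1), Matrix.mul_apply, Fin.sum_univ_two]
    exact ⟨le_order_mul_add_mul ih11 h11 ih12 h21 (by omega) (by omega),
      le_order_mul_add_mul ih11 h12 ih12 h22 (by omega) (by omega),
      le_order_mul_add_mul ih21 h11 ih22 h21 (by omega) (by omega),
      le_order_mul_add_mul ih21 h12 ih22 h22 (by omega) (by omega)⟩

theorem min_minCycleWeight_le_order_pow_add_two_diag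
    (h11 : (k : ℕ∞) ≤ (M 0 0).order) (h12 : (g : ℕ∞) ≤ (M 0 1).order)
    (h21 : (r : ℕ∞) ≤ (M 1 0).order) (h22 : (l : ℕ∞) ≤ (M 1 1).order) (n : ℕ) :
    ((min ((n + 2) * k) (g + r + minCycleWeight (min k l) (g + r) n) : ℕ) : ℕ∞) ≤
      ((M ^ (n + 2)) 0 0).order ∧
    ((min ((n + 2) * l) (g + r + minCycleWeight (min k l) (g + r) n) : ℕ) : ℕ∞) ≤
      ((M ^ (n + 2)) 1 1).order := by
  induction n with
  | zero =>
    simp only [minCycleWeight, zero_add, pow_two, Matrix.mul_apply, Fin.sum_univ_two]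
    exact ⟨le_order_mul_add_mul h11 h11 h12 h21 (by omega) (by omega),
      le_order_mul_add_mul h21 h12 h22 h22 (by omega) (by omega)⟩
  | succ n ih =>
    obtain ⟨ih11, ih22⟩ := ih
    obtain ⟨-, h12_pow, h21_pow, -⟩ :=
      minCycleWeight_le_order_pow_succ h11 h12 h21 h22 (n + 1)
    have hloop := minCycleWeight_succ_le (min k l) (g + r) n
    rw [show n + 1 + 2 = n + 2 + 1 from rfl, pow_succ M (n + 2), Matrix.mul_apply,
      Matrix.mul_apply, Fin.sum_univ_two, Fin.sum_univ_two, add_mul _ 1 k, add_mul _ 1 l]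
    exact ⟨le_order_mul_add_mul ih11 h11 h12_pow h21 (by omega) (by omega),
      le_order_mul_add_mul h21_pow h12 ih22 h22 (by omega) (by omega)⟩

end PowerSeriesMatrix

theorem statement6_general (R : Type*) [Semiring R] (k l r : ℕ)
    (M : Matrix (Fin 2) (Fin 2) (PowerSeries R))
    (h11 : (k : ℕ∞) ≤ (M 0 0).order) (h21 : (r : ℕ∞) ≤ (M 1 0).order)
    (h22 : (l : ℕ∞) ≤ (M 1 1).order)
    (s : ℕ) (hs3 : 3 ≤ s) (hso : Odd s) :
    ((min (s * k) (min (k + (s - 1) / 2 * r)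
        (min (l + (s - 1) / 2 * r) ((s - 2) * l + r))) : ℕ) : ℕ∞) ≤ ((M ^ s) 0 0).order ∧
    ((min ((s - 1) * k) (min ((s - 1) / 2 * r) ((s - 1) * l)) : ℕ) : ℕ∞) ≤
        ((M ^ s) 0 1).order ∧
    ((min ((s - 1) * k + r) (min ((s + 1) / 2 * r) ((s - 1) * l + r)) : ℕ) : ℕ∞) ≤
        ((M ^ s) 1 0).order ∧
    ((min ((s - 2) * k + r) (min (k + (s - 1) / 2 * r)
        (min (l + (s - 1) / 2 * r) (s * l))) : ℕ) : ℕ∞) ≤ ((M ^ s) 1 1).order := by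
  obtain ⟨m, rfl⟩ : ∃ m, s = 2 * m + 3 := by
    obtain ⟨j, rfl⟩ := hso
    exact ⟨j - 1, by omega⟩
  have h12 : ((0 : ℕ) : ℕ∞) ≤ (M 0 1).order := by simp
  obtain ⟨-, b12, b21, -⟩ := minCycleWeight_le_order_pow_succ h11 h12 h21 h22 (2 * (m + 1))
  obtain ⟨b11, b22⟩ := min_minCycleWeight_le_order_pow_add_two_diag h11 h12 h21 h22 (2 * m + 1)
  simp only [zero_add, minCycleWeight_min_two_mul] at b11 b12 b21 b22
  have half_pred : (2 * m + 3 - 1) / 2 = m + 1 := by omega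
  have half_succ : (2 * m + 3 + 1) / 2 = m + 2 := by omega
  have pred : 2 * m + 3 - 1 = 2 * (m + 1) := by omega
  have pred_pred : 2 * m + 3 - 2 = 2 * m + 1 := by omega
  rw [half_pred, half_succ, pred, pred_pred]
  refine ⟨le_trans (mod_cast ?_) b11, b12, le_trans (mod_cast ?_) b21, le_trans (mod_cast ?_) b22⟩
  · exact min_le_min_minCycleWeight_two_mul_add_one r k l m
  · rw [show m + 2 = m + 1 + 1 from rfl, add_mul (m + 1)]
    omega
  · have hdiag := min_le_min_minCycleWeight_two_mul_add_one r l k m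
    rw [min_comm l k] at hdiag
    exact le_of_eq_of_le (by ac_rfl) hdiag

/-- odd powers. Tropical lower bounds for the orders of the entries
of `M^s`, for `M` a `2×2` matrix over `F[[t]]` with `ord M₁₁ ≥ k`, `ord M₂₁ ≥ r`,
`ord M₂₂ ≥ l` and `s ≥ 3` odd. -/
theorem statement6 (F : Type*) [Field F] (k l r : ℕ)
    (M : Matrix (Fin 2) (Fin 2) (PowerSeries F))
    (h11 : (k : ℕ∞) ≤ (M 0 0).order) (h21 : (r : ℕ∞) ≤ (M 1 0).order)
    (h22 : (l : ℕ∞) ≤ (M 1 1).order)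
    (s : ℕ) (hs3 : 3 ≤ s) (hso : Odd s) :
    ((min (s * k) (min (k + (s - 1) / 2 * r)
        (min (l + (s - 1) / 2 * r) ((s - 2) * l + r))) : ℕ) : ℕ∞) ≤ ((M ^ s) 0 0).order ∧
    ((min ((s - 1) * k) (min ((s - 1) / 2 * r) ((s - 1) * l)) : ℕ) : ℕ∞) ≤
        ((M ^ s) 0 1).order ∧
    ((min ((s - 1) * k + r) (min ((s + 1) / 2 * r) ((s - 1) * l + r)) : ℕ) : ℕ∞) ≤
        ((M ^ s) 1 0).order ∧
    ((min ((s - 2) * k + r) (min (k + (s - 1) / 2 * r)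
        (min (l + (s - 1) / 2 * r) (s * l))) : ℕ) : ℕ∞) ≤ ((M ^ s) 1 1).order :=
  statement6_general F k l r M h11 h21 h22 s hs3 hso
end
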